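/- arXiv:2105.13201 — 6 statements merged into one kernel-verified Lean document; each statement's English description precedes it below -/
import Mathlib

section
/- There exists a universal constant C > 0 with the following property. Let d ≥ 1, let ρ̄ be a probability measure on the torus 𝕋^d, and let φ : 𝕋^d × 𝕋^d → ℝ be a bounded measurable function satisfying the cancellations ∫_{𝕋^d} φ(x,y) dρ̄(x) = 0 for every y ∈ 𝕋^d and ∫_{𝕋^d} φ(x,y) dρ̄(y) = 0 for every x ∈ 𝕋^d. If γ := C‖φ‖_{L^∞}² < 1, then for every integer N ≥ 2, ∫_{(𝕋^d)^N} exp( N ⟨φ, μ_N ⊗ μ_N⟩ ) dρ̄^{⊗N}(x_1,…,x_N) ≤ 2/(1 − γ). -/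
open MeasureTheory

/-- The `d`-dimensional torus `𝕋^d`. -/
abbrev Torus (d : ℕ) := Fin d → AddCircle (2 * Real.pi)

theorem aux_mgf {X : Type*} [MeasurableSpace X] (ρ : Measure X) [IsProbabilityMeasure ρ]
    (Z : X → ℝ) (hZ : Measurable Z) (B : ℝ) (hB : ∀ x, |Z x| ≤ B) (h0 : ∫ x, Z x ∂ρ = 0) (s : ℝ) :
    ∫ x, Real.exp (s * Z x) ∂ρ ≤ Real.exp (s ^ 2 * B ^ 2 / 2) := by
  have h := (ProbabilityTheory.hasSubgaussianMGF_of_mem_Icc_of_integral_eq_zero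
    (μ := ρ) (X := Z) (a := -B) (b := B) hZ.aemeasurable
    (Filter.Eventually.of_forall fun x => abs_le.1 (hB x)) h0).mgf_le s
  rw [ProbabilityTheory.mgf] at h
  refine h.trans (le_of_eq ?_)
  congr 1
  push_cast
  rw [div_pow, Real.norm_eq_abs, sq_abs]
  ring

theorem aux_lint {X : Type*} [MeasurableSpace X] (ρ : Measure X) [IsProbabilityMeasure ρ]
    (f : X → ℝ) (hf : Measurable f) (B : ℝ) (hB : ∀ x, |f x| ≤ B) :
    Integrable f ρ :=
  Integrable.of_bound hf.aestronglyMeasurable B (Filter.Eventually.of_forall hB)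

theorem aux_intexp {X : Type*} [MeasurableSpace X] (ρ : Measure X) [IsProbabilityMeasure ρ]
    (f : X → ℝ) (hf : Measurable f) (B : ℝ) (hB : ∀ x, |f x| ≤ B) :
    Integrable (fun x => Real.exp (f x)) ρ :=
  aux_lint ρ _ hf.exp (Real.exp B) fun x => by
    rw [abs_of_pos (Real.exp_pos _)]
    exact Real.exp_le_exp.2 ((le_abs_self _).trans (hB x))

theorem aux_gauss (b T : ℝ) (hb : 0 < b) :
    ENNReal.ofReal (Real.exp (T ^ 2 / (4 * b))) =
      ∫⁻ s : ℝ, ENNReal.ofReal (√(b / Real.pi) * Real.exp (s * T - b * s ^ 2)) := by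
  have e : ∀ s : ℝ, √(b / Real.pi) * Real.exp (s * T - b * s ^ 2) =
      (√(b / Real.pi) * Real.exp (T ^ 2 / (4 * b))) *
        Real.exp (-b * (s - T / (2 * b)) ^ 2) := by
    intro s
    rw [mul_assoc, ← Real.exp_add]
    congr 2
    field_simp
    ring
  simp_rw [e]
  have hi : Integrable (fun s : ℝ => Real.exp (-b * (s - T / (2 * b)) ^ 2)) :=
    (integrable_exp_neg_mul_sq hb).comp_sub_right (T / (2 * b))
  rw [← ofReal_integral_eq_lintegral_ofReal (hi.const_mul _)
    (Filter.Eventually.of_forall fun s => by positivity), integral_const_mul,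
    integral_sub_right_eq_self (fun s : ℝ => Real.exp (-b * s ^ 2)), integral_gaussian]
  congr 1
  have : √(b / Real.pi) * √(Real.pi / b) = 1 := by
    rw [← Real.sqrt_mul (by positivity)]
    have := Real.pi_pos
    field_simp
    simp
  linear_combination (-Real.exp (T ^ 2 / (4 * b))) * this

theorem aux_sq {X : Type*} [MeasurableSpace X] (ρ : Measure X) [IsProbabilityMeasure ρ]
    {ι : Type*} [Fintype ι] (N : ℕ) (hN : 0 < N) (hc : Fintype.card ι ≤ N)
    (Z : X → ℝ) (hZ : Measurable Z) (B : ℝ) (hB : ∀ x, |Z x| ≤ B) (h0 : ∫ x, Z x ∂ρ = 0)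
    (hB1 : 32 * B ^ 2 < 1) :
    ∫⁻ x : ι → X, ENNReal.ofReal (Real.exp (16 / N * (∑ i, Z (x i)) ^ 2))
      ∂(Measure.pi fun _ => ρ) ≤ ENNReal.ofReal √(1 / (1 - 32 * B ^ 2)) := by
  have hN' : (0 : ℝ) < N := by exact_mod_cast hN
  set b : ℝ := N / 64 with hb
  have hbp : 0 < b := by positivity
  have hd : 0 < 1 - 32 * B ^ 2 := by linarith
  have e1 : ∀ x : ι → X, ENNReal.ofReal (Real.exp (16 / N * (∑ i, Z (x i)) ^ 2)) =
      ∫⁻ s : ℝ, ENNReal.ofReal (√(b / Real.pi) * Real.exp (s * (∑ i, Z (x i)) - b * s ^ 2)) := by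
    intro x
    rw [← aux_gauss b _ hbp]
    congr 2
    rw [hb]; field_simp; ring
  simp_rw [e1]
  rw [lintegral_lintegral_swap (by
    apply Measurable.aemeasurable
    unfold Function.uncurry
    fun_prop)]
  have e2 : ∀ s : ℝ, ∫⁻ x : ι → X, ENNReal.ofReal
      (√(b / Real.pi) * Real.exp (s * (∑ i, Z (x i)) - b * s ^ 2)) ∂(Measure.pi fun _ => ρ) ≤
      ENNReal.ofReal (√(b / Real.pi) * Real.exp (-(b * (1 - 32 * B ^ 2)) * s ^ 2)) := by
    intro s
    have hi : Integrable (fun x : ι → X => √(b / Real.pi) *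
        Real.exp (s * (∑ i, Z (x i)) - b * s ^ 2)) (Measure.pi fun _ => ρ) := by
      apply Integrable.const_mul
      apply aux_intexp _ _ (by fun_prop) (|s| * (∑ i : ι, B) + |b * s ^ 2|)
      intro x
      refine (abs_sub _ _).trans ?_
      gcongr
      rw [abs_mul]
      gcongr
      exact (Finset.abs_sum_le_sum_abs _ _).trans (Finset.sum_le_sum fun i _ => hB _)
    rw [← ofReal_integral_eq_lintegral_ofReal hi
      (Filter.Eventually.of_forall fun s => by positivity)]
    apply ENNReal.ofReal_le_ofReal
    have e3 : ∀ x : ι → X, √(b / Real.pi) * Real.exp (s * (∑ i, Z (x i)) - b * s ^ 2) =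
      (√(b / Real.pi) * Real.exp (- b * s ^ 2)) * ∏ i, Real.exp (s * Z (x i)) := by
      intro x
      rw [← Real.exp_sum, mul_assoc, ← Real.exp_add, Finset.mul_sum]
      congr 2; ring
    simp_rw [e3]
    rw [integral_const_mul, integral_fintype_prod_eq_pow (fun x => Real.exp (s * Z x))]
    rw [mul_assoc]
    refine mul_le_mul_of_nonneg_left ?_ (by positivity)
    have h1 : (∫ x, Real.exp (s * Z x) ∂ρ) ^ Fintype.card ι ≤
        Real.exp (N * (s ^ 2 * B ^ 2 / 2)) := by
      calc _ ≤ (Real.exp (s ^ 2 * B ^ 2 / 2)) ^ Fintype.card ι :=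
            pow_le_pow_left₀ (integral_nonneg fun x => (Real.exp_pos _).le)
              (aux_mgf ρ Z hZ B hB h0 s) _
        _ ≤ (Real.exp (s ^ 2 * B ^ 2 / 2)) ^ N :=
            pow_le_pow_right₀ (Real.one_le_exp (by positivity)) hc
        _ = _ := by rw [← Real.exp_nat_mul]
    calc _ ≤ Real.exp (-b * s ^ 2) * Real.exp (N * (s ^ 2 * B ^ 2 / 2)) :=
          mul_le_mul_of_nonneg_left h1 (by positivity)
      _ = _ := by
        rw [← Real.exp_add]; congr 1; rw [hb]; ring
  refine (lintegral_mono e2).trans ?_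
  have hbd : 0 < b * (1 - 32 * B ^ 2) := by positivity
  rw [← ofReal_integral_eq_lintegral_ofReal ((integrable_exp_neg_mul_sq hbd).const_mul _)
      (Filter.Eventually.of_forall fun s => by positivity), integral_const_mul, integral_gaussian]
  apply ENNReal.ofReal_le_ofReal
  rw [← Real.sqrt_mul (by positivity)]
  apply Real.sqrt_le_sqrt
  apply le_of_eq
  have := Real.pi_pos
  field_simp

theorem aux_dec {X : Type*} [MeasurableSpace X] (ρ : Measure X) [IsProbabilityMeasure ρ]
    {α β : Type*} [Fintype α] [Fintype β] (N : ℕ) (hN : 0 < N) (hα : Fintype.card α ≤ N)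
    (hβ : Fintype.card β ≤ N)
    (φ : X → X → ℝ) (hφ : Measurable (Function.uncurry φ)) (B : ℝ) (hB : ∀ x y, |φ x y| ≤ B)
    (h1 : ∀ y, ∫ x, φ x y ∂ρ = 0) (h2 : ∀ x, ∫ y, φ x y ∂ρ = 0) (hB0 : 0 ≤ B)
    (hB1 : 32 * B ^ 2 < 1) (hB2 : 4 * B ≤ 1) :
    ∫⁻ p : (α → X) × (β → X), ENNReal.ofReal (Real.exp (4 / N * ∑ i, ∑ j, φ (p.1 i) (p.2 j)))
      ∂((Measure.pi fun _ => ρ).prod (Measure.pi fun _ => ρ)) ≤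
      ENNReal.ofReal √(1 / (1 - 32 * B ^ 2)) := by
  have hN' : (0 : ℝ) < N := by exact_mod_cast hN
  rw [lintegral_prod _ (by
    apply Measurable.aemeasurable
    apply Measurable.ennreal_ofReal
    apply Measurable.exp
    apply Measurable.const_mul
    refine Finset.measurable_sum _ fun i _ => Finset.measurable_sum _ fun j _ => ?_
    exact hφ.comp (by fun_prop : Measurable fun p : (α → X) × (β → X) => (p.1 i, p.2 j)))]
  have key : ∀ x : α → X, ∫⁻ y : β → X, ENNReal.ofReal (Real.exp (4 / N * ∑ i, ∑ j, φ (x i) (y j)))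
      ∂(Measure.pi fun _ => ρ) ≤
      ∫⁻ y, ENNReal.ofReal (Real.exp (16 / N * (∑ i, φ (x i) y) ^ 2)) ∂ρ := by
    intro x
    set f : X → ℝ := fun y => ∑ i, φ (x i) y with hf
    have hfm : Measurable f :=
      Finset.measurable_sum _ fun i _ => hφ.comp (by fun_prop : Measurable fun y => (x i, y))
    have hfb : ∀ y, |f y| ≤ N * B := by
      intro y
      calc _ ≤ ∑ i, |φ (x i) y| := Finset.abs_sum_le_sum_abs _ _
        _ ≤ ∑ i : α, B := Finset.sum_le_sum fun i _ => hB _ _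
        _ = Fintype.card α * B := by simp
        _ ≤ _ := by gcongr
    have hf0 : ∫ y, f y ∂ρ = 0 := by
      have hi : ∀ i ∈ Finset.univ, Integrable (fun y => φ (x i) y) ρ := fun i _ => aux_lint ρ _
        (hφ.comp (by fun_prop : Measurable fun y => (x i, y))) B (hB _)
      simp only [hf]
      rw [integral_finsetSum _ hi]
      simp [h2]
    have hfi := aux_lint ρ f hfm _ hfb
    have hsqb : ∀ y, |16 / (N : ℝ) * f y ^ 2| ≤ 16 / N * (N * B) ^ 2 := by
      intro y
      rw [abs_of_nonneg (by positivity)]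
      gcongr 16 / (N : ℝ) * ?_
      rw [← sq_abs]
      exact pow_le_pow_left₀ (abs_nonneg _) (hfb y) 2
    have hsqi := aux_lint ρ _ ((hfm.pow_const 2).const_mul (16 / (N : ℝ))) _ hsqb
    have hsqe := aux_intexp ρ _ ((hfm.pow_const 2).const_mul (16 / (N : ℝ))) _ hsqb
    have hub : ∀ y, |4 / (N : ℝ) * f y| ≤ 1 := by
      intro y
      rw [abs_mul, abs_of_pos (by positivity)]
      calc _ ≤ 4 / (N : ℝ) * (N * B) := by gcongr; exact hfb y
        _ = 4 * B := by field_simp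
        _ ≤ 1 := hB2
    have hue := aux_intexp ρ _ (hfm.const_mul (4 / (N : ℝ))) _ hub
    have hsi : Integrable (fun y => f y ^ 2) ρ :=
      aux_lint ρ _ (hfm.pow_const 2) ((N * B) ^ 2) fun y => by
        rw [abs_of_nonneg (by positivity), ← sq_abs]
        exact pow_le_pow_left₀ (abs_nonneg _) (hfb y) 2
    have hone : ∫ y, Real.exp (4 / N * f y) ∂ρ ≤ Real.exp (16 / N ^ 2 * ∫ y, f y ^ 2 ∂ρ) := by
      calc _ ≤ ∫ y, (1 + 4 / N * f y + 16 / N ^ 2 * f y ^ 2) ∂ρ := by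
            apply integral_mono hue
            · exact ((integrable_const _).add (hfi.const_mul _)).add (hsi.const_mul _)
            · intro y
              have := (abs_le.1 (Real.abs_exp_sub_one_sub_id_le (hub y))).2
              have e : (4 / (N : ℝ) * f y) ^ 2 = 16 / N ^ 2 * f y ^ 2 := by
                field_simp; ring
              simp only
              linarith
        _ = 1 + 16 / N ^ 2 * ∫ y, f y ^ 2 ∂ρ := by
            have i1 : Integrable (fun y => 1 + 4 / (N : ℝ) * f y) ρ :=
              (integrable_const _).add (hfi.const_mul _)
            rw [integral_add i1 (hsi.const_mul _),
              integral_add (integrable_const _) (hfi.const_mul _), integral_const_mul,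
              integral_const_mul, hf0]
            simp
        _ ≤ _ := by
            rw [add_comm]; exact Real.add_one_le_exp _
    have hpos : 0 ≤ ∫ y, f y ^ 2 ∂ρ := integral_nonneg fun y => sq_nonneg _
    have e : ∀ y : β → X, Real.exp (4 / N * ∑ i, ∑ j, φ (x i) (y j)) =
        ∏ j, Real.exp (4 / N * f (y j)) := by
      intro y
      rw [← Real.exp_sum, ← Finset.mul_sum, Finset.sum_comm]
    simp_rw [e]
    have hpi : Integrable (fun y : β → X => ∏ j, Real.exp (4 / N * f (y j)))
        (Measure.pi fun _ => ρ) := by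
      exact Integrable.fintype_prod (f := fun _ y => Real.exp (4 / N * f y)) fun _ => hue
    rw [← ofReal_integral_eq_lintegral_ofReal hpi
      (Filter.Eventually.of_forall fun s => Finset.prod_nonneg fun j _ => (Real.exp_pos _).le),
      ← ofReal_integral_eq_lintegral_ofReal hsqe
      (Filter.Eventually.of_forall fun s => (Real.exp_pos _).le)]
    apply ENNReal.ofReal_le_ofReal
    rw [integral_fintype_prod_eq_pow (fun y => Real.exp (4 / N * f y))]
    calc _ ≤ (Real.exp (16 / N ^ 2 * ∫ y, f y ^ 2 ∂ρ)) ^ Fintype.card β :=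
          pow_le_pow_left₀ (integral_nonneg fun x => (Real.exp_pos _).le) hone _
      _ ≤ (Real.exp (16 / N ^ 2 * ∫ y, f y ^ 2 ∂ρ)) ^ N :=
          pow_le_pow_right₀ (Real.one_le_exp (by positivity)) hβ
      _ = Real.exp (∫ y, 16 / N * f y ^ 2 ∂ρ) := by
          rw [← Real.exp_nat_mul, integral_const_mul]
          congr 1; field_simp
      _ ≤ _ := convexOn_exp.map_integral_le Real.continuous_exp.continuousOn isClosed_univ
          (by simp) hsqi hsqe
  refine (lintegral_mono key).trans ?_
  rw [lintegral_lintegral_swap (by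
    apply Measurable.aemeasurable
    unfold Function.uncurry
    apply Measurable.ennreal_ofReal
    apply Measurable.exp
    apply Measurable.const_mul
    apply Measurable.pow_const
    refine Finset.measurable_sum _ fun i _ => ?_
    exact hφ.comp (by fun_prop : Measurable fun p : (α → X) × X => (p.1 i, p.2)))]
  refine (lintegral_mono fun y => aux_sq ρ N hN hα (fun x => φ x y)
    (hφ.comp (by fun_prop : Measurable fun x => (x, y))) B (fun x => hB x y) (h1 y) hB1).trans ?_
  simp

theorem aux_count {ι : Type*} [Fintype ι] [DecidableEq ι] (i j : ι) (hij : i ≠ j) :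
    ∑ ε : ι → Bool, (if ε i = true ∧ ¬ ε j = true then (4 : ℝ) else 0) = 2 ^ Fintype.card ι := by
  have flip : ∀ (k : ι) (F : (ι → Bool) → ℝ),
      ∑ ε, F ε = ∑ ε : ι → Bool, F (Function.update ε k (!ε k)) := by
    intro k F
    symm
    apply Function.Bijective.sum_comp (e := fun ε : ι → Bool => Function.update ε k (!ε k))
    apply Function.Involutive.bijective
    intro ε
    simp
  set F : (ι → Bool) → ℝ := fun ε => if ε i = true ∧ ¬ ε j = true then (1 : ℝ) else 0 with hF
  have a1 := flip i F
  have a2 := flip j F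
  have a3 := flip j (fun ε => F (Function.update ε i (!ε i)))
  have hs : ∑ ε : ι → Bool, (F ε + F (Function.update ε i (!ε i)) + F (Function.update ε j (!ε j))
    + F (Function.update (Function.update ε j (!ε j)) i (!(Function.update ε j (!ε j)) i)))
     = 2 ^ Fintype.card ι := by
    rw [Finset.sum_congr rfl (g := fun _ => (1 : ℝ))]
    · simp
    · intro ε _
      simp only [hF, Function.update_self, Function.update_of_ne hij, Function.update_of_ne hij.symm]
      cases ε i <;> cases ε j <;> simp
  simp only [Finset.sum_add_distrib] at hs
  have : ∑ ε : ι → Bool, (if ε i = true ∧ ¬ ε j = true then (4 : ℝ) else 0) = 4 * ∑ ε, F ε := by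
    rw [Finset.mul_sum]
    refine Finset.sum_congr rfl fun ε _ => ?_
    simp [hF]
  rw [this]
  linarith

theorem aux_sub {ι : Type*} [Fintype ι] (p : ι → Prop) [DecidablePred p] (g : ι → ℝ) :
    ∑ i : {i // p i}, g i = ∑ i, if p i then g i else 0 := by
  rw [← Finset.sum_filter]
  exact (Finset.sum_subtype (Finset.univ.filter p) (by simp) g).symm

theorem aux_split {X : Type*} [MeasurableSpace X] (ρ : Measure X) [IsProbabilityMeasure ρ]
    (N : ℕ) (hN : 0 < N)
    (φ : X → X → ℝ) (hφ : Measurable (Function.uncurry φ)) (B : ℝ) (hB : ∀ x y, |φ x y| ≤ B)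
    (h1 : ∀ y, ∫ x, φ x y ∂ρ = 0) (h2 : ∀ x, ∫ y, φ x y ∂ρ = 0) (hB0 : 0 ≤ B)
    (hB1 : 32 * B ^ 2 < 1) (hB2 : 4 * B ≤ 1) (ε : Fin N → Bool) :
    ∫⁻ x : Fin N → X, ENNReal.ofReal (Real.exp (∑ i, ∑ j,
      if ε i = true ∧ ¬ ε j = true then 4 / N * φ (x i) (x j) else 0)) ∂(Measure.pi fun _ => ρ) ≤
      ENNReal.ofReal √(1 / (1 - 32 * B ^ 2)) := by
  have hmp := measurePreserving_piEquivPiSubtypeProd (fun _ : Fin N => ρ) (fun i => ε i = true)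
  refine le_trans (le_of_eq ?_) (aux_dec ρ (α := {i // ε i = true}) (β := {i // ¬ ε i = true}) N hN
    ((Fintype.card_subtype_le _).trans (by simp)) ((Fintype.card_subtype_le _).trans (by simp))
    φ hφ B hB h1 h2 hB0 hB1 hB2)
  rw [← hmp.lintegral_comp_emb (MeasurableEquiv.measurableEmbedding _)]
  refine lintegral_congr fun x => ?_
  congr 2
  change _ = 4 / (N : ℝ) * ∑ i : {i // ε i = true}, ∑ j : {i // ¬ ε i = true}, φ (x i) (x j)
  rw [aux_sub (fun i => ε i = true) fun i => ∑ j : {i // ¬ ε i = true}, φ (x i) (x j),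
    Finset.mul_sum]
  refine Finset.sum_congr rfl fun i _ => ?_
  rw [aux_sub (fun i => ¬ ε i = true) fun j => φ (x i) (x j)]
  by_cases hi : ε i = true
  · simp only [hi, true_and, if_true, Finset.mul_sum, mul_ite, mul_zero]
  · simp [hi]

theorem aux_main {X : Type*} [MeasurableSpace X] (ρ : Measure X) [IsProbabilityMeasure ρ]
    (N : ℕ) (hN : 0 < N)
    (φ : X → X → ℝ) (hφ : Measurable (Function.uncurry φ)) (B : ℝ) (hB : ∀ x y, |φ x y| ≤ B)
    (h1 : ∀ y, ∫ x, φ x y ∂ρ = 0) (h2 : ∀ x, ∫ y, φ x y ∂ρ = 0) (hB0 : 0 ≤ B)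
    (hB1 : 32 * B ^ 2 < 1) (hB2 : 4 * B ≤ 1) :
    ∫ x : Fin N → X, Real.exp ((N : ℝ) * (((N : ℝ) ^ 2)⁻¹ * ∑ i : Fin N, ∑ j : Fin N, φ (x i) (x j)))
      ∂(Measure.pi fun _ => ρ) ≤ Real.exp B * √(1 / (1 - 32 * B ^ 2)) := by
  have hN' : (0 : ℝ) < N := by exact_mod_cast hN
  have hm : ∀ i j : Fin N, Measurable fun x : Fin N → X => φ (x i) (x j) := fun i j =>
    hφ.comp (by fun_prop : Measurable fun x : Fin N → X => (x i, x j))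
  set G : (Fin N → Bool) → (Fin N → X) → ℝ := fun ε x => ∑ i, ∑ j,
      if ε i = true ∧ ¬ ε j = true then 4 / N * φ (x i) (x j) else 0 with hG
  have hGm : ∀ ε, Measurable (G ε) := by
    intro ε
    refine Finset.measurable_sum _ fun i _ => Finset.measurable_sum _ fun j _ => ?_
    split_ifs
    · exact (hm i j).const_mul _
    · exact measurable_const
  have hpt : ∀ x : Fin N → X,
      (N : ℝ) * (((N : ℝ) ^ 2)⁻¹ * ∑ i : Fin N, ∑ j : Fin N, φ (x i) (x j)) ≤
      B + ∑ ε, ((2 : ℝ) ^ N)⁻¹ • G ε x := by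
    intro x
    have a1 : ∑ ε, ((2 : ℝ) ^ N)⁻¹ • G ε x = ∑ i, ∑ j, (((2 : ℝ) ^ N)⁻¹ * ((N : ℝ)⁻¹ *
        φ (x i) (x j))) * ∑ ε : Fin N → Bool,
          (if ε i = true ∧ ¬ ε j = true then (4 : ℝ) else 0) := by
      simp only [hG, smul_eq_mul, Finset.mul_sum]
      rw [Finset.sum_comm]
      refine Finset.sum_congr rfl fun i _ => ?_
      rw [Finset.sum_comm]
      refine Finset.sum_congr rfl fun j _ => ?_
      refine Finset.sum_congr rfl fun ε _ => ?_
      split_ifs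
      · ring
      · simp
    have a2 : B = ∑ i : Fin N, ∑ j : Fin N, if i = j then B / N else 0 := by
      simp; field_simp
    have a3 : (N : ℝ) * (((N : ℝ) ^ 2)⁻¹ * ∑ i : Fin N, ∑ j : Fin N, φ (x i) (x j)) =
        ∑ i : Fin N, ∑ j : Fin N, (N : ℝ)⁻¹ * φ (x i) (x j) := by
      simp only [← Finset.mul_sum]
      field_simp
    rw [a1, a3]
    nth_rw 1 [a2]
    simp only [← Finset.sum_add_distrib]
    refine Finset.sum_le_sum fun i _ => Finset.sum_le_sum fun j _ => ?_
    by_cases hij : i = j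
    · subst hij
      simp only [if_true, and_not_self, if_false, Finset.sum_const_zero, mul_zero, add_zero]
      rw [div_eq_inv_mul]
      gcongr
      exact (le_abs_self _).trans (hB _ _)
    · rw [aux_count i j hij]
      simp only [hij, if_false, Fintype.card_fin, zero_add]
      apply le_of_eq
      field_simp
  have hexp : ∀ x : Fin N → X,
      Real.exp ((N : ℝ) * (((N : ℝ) ^ 2)⁻¹ * ∑ i : Fin N, ∑ j : Fin N, φ (x i) (x j))) ≤
      (Real.exp B * ((2 : ℝ) ^ N)⁻¹) * ∑ ε, Real.exp (G ε x) := by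
    intro x
    refine (Real.exp_le_exp.2 (hpt x)).trans ?_
    rw [Real.exp_add, mul_assoc]
    gcongr
    refine (convexOn_exp.map_sum_le (t := Finset.univ) (w := fun _ => ((2 : ℝ) ^ N)⁻¹)
      (p := fun ε => G ε x) (fun _ _ => by positivity) (by simp) (by simp)).trans ?_
    simp [Finset.mul_sum]
  rw [integral_eq_lintegral_of_nonneg_ae (Filter.Eventually.of_forall fun x => (Real.exp_pos _).le)
    (by
      apply Measurable.aestronglyMeasurable
      apply Measurable.exp
      apply Measurable.const_mul
      apply Measurable.const_mul
      exact Finset.measurable_sum _ fun i _ => Finset.measurable_sum _ fun j _ => hm i j)]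
  apply ENNReal.toReal_le_of_le_ofReal (by positivity)
  calc _ ≤ ∫⁻ x : Fin N → X, ENNReal.ofReal (Real.exp B * ((2 : ℝ) ^ N)⁻¹) *
          ∑ ε, ENNReal.ofReal (Real.exp (G ε x)) ∂(Measure.pi fun _ => ρ) := by
        refine lintegral_mono fun x => ?_
        rw [← ENNReal.ofReal_sum_of_nonneg fun _ _ => (Real.exp_pos _).le,
          ← ENNReal.ofReal_mul (by positivity)]
        exact ENNReal.ofReal_le_ofReal (hexp x)
    _ = ENNReal.ofReal (Real.exp B * ((2 : ℝ) ^ N)⁻¹) *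
          ∑ ε, ∫⁻ x : Fin N → X, ENNReal.ofReal (Real.exp (G ε x)) ∂(Measure.pi fun _ => ρ) := by
        rw [lintegral_const_mul' _ _ ENNReal.ofReal_ne_top,
          lintegral_finsetSum _ fun ε _ => (hGm ε).exp.ennreal_ofReal]
    _ ≤ ENNReal.ofReal (Real.exp B * ((2 : ℝ) ^ N)⁻¹) *
          ∑ ε : Fin N → Bool, ENNReal.ofReal √(1 / (1 - 32 * B ^ 2)) := by
        gcongr with ε
        exact aux_split ρ N hN φ hφ B hB h1 h2 hB0 hB1 hB2 ε
    _ = _ := by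
        rw [← ENNReal.ofReal_sum_of_nonneg fun _ _ => Real.sqrt_nonneg _,
          ← ENNReal.ofReal_mul (by positivity)]
        congr 1
        simp
        field_simp

/-- **Large deviation estimate of Jabin–Wang.**
There exists a universal constant `C > 0` such that for every `d ≥ 1`, every probability
measure `ρ̄` on the torus `𝕋^d`, and every bounded measurable function
`φ : 𝕋^d × 𝕋^d → ℝ` (with pointwise bound `B`) satisfying the cancellations
`∫ φ(x,y) dρ̄(x) = 0` for all `y` and `∫ φ(x,y) dρ̄(y) = 0` for all `x`:
if `γ := C‖φ‖_∞² < 1` then for every `N ≥ 2`,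
`∫ exp(N ⟨φ, μ_N ⊗ μ_N⟩) dρ̄^{⊗N} ≤ 2/(1 − γ)`,
where `⟨φ, μ_N ⊗ μ_N⟩ = N⁻² ∑_{i,j} φ(x_i, x_j)`. -/
theorem statement0 :
    ∃ C : ℝ, 0 < C ∧
      ∀ (d : ℕ), 1 ≤ d →
      ∀ (ρ : Measure (Torus d)), IsProbabilityMeasure ρ →
      ∀ (φ : Torus d → Torus d → ℝ), Measurable (Function.uncurry φ) →
      ∀ B : ℝ, (∀ x y, |φ x y| ≤ B) →
        (∀ y, ∫ x, φ x y ∂ρ = 0) →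
        (∀ x, ∫ y, φ x y ∂ρ = 0) →
        C * B ^ 2 < 1 →
        ∀ N : ℕ, 2 ≤ N →
          ∫ x : Fin N → Torus d,
              Real.exp ((N : ℝ) *
                (((N : ℝ) ^ 2)⁻¹ * ∑ i : Fin N, ∑ j : Fin N, φ (x i) (x j)))
            ∂(Measure.pi fun _ => ρ)
          ≤ 2 / (1 - C * B ^ 2) := by
  refine ⟨400, by norm_num, ?_⟩
  intro d _ ρ hρ φ hφ B hB h1 h2 hC N hN
  have hB0 : 0 ≤ B := (abs_nonneg _).trans (hB 0 0)
  have hB3 : B ≤ 1 / 20 := by nlinarith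
  refine (aux_main ρ N (by omega) φ hφ B hB h1 h2 hB0 (by nlinarith) (by linarith)).trans ?_
  have e1 : Real.exp B ≤ 6 / 5 := by
    have := (abs_le.1 (Real.abs_exp_sub_one_sub_id_le (x := B)
      (by rw [abs_of_nonneg hB0]; linarith))).2
    nlinarith
  have e2 : √(1 / (1 - 32 * B ^ 2)) ≤ 5 / 3 := by
    rw [Real.sqrt_le_left (by norm_num), div_le_iff₀ (by nlinarith)]
    nlinarith
  have e3 : 2 ≤ 2 / (1 - 400 * B ^ 2) := by
    rw [le_div_iff₀ (by linarith)]
    nlinarith [sq_nonneg B]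
  calc _ ≤ (6 / 5 : ℝ) * (5 / 3) := by gcongr
    _ ≤ 2 := by norm_num
    _ ≤ _ := e3
end

section
/- There exists a universal constant C > 0 with the following property. Let d ≥ 1, let ρ̄ be a probability measure on the torus 𝕋^d, and let φ : 𝕋^d × 𝕋^d → ℝ be a bounded measurable function satisfying the cancellations ∫_{𝕋^d} φ(x,y) dρ̄(x) = 0 for every y ∈ 𝕋^d and ∫_{𝕋^d} φ(x,y) dρ̄(y) = 0 for every x ∈ 𝕋^d. If γ := C‖φ‖_{L^∞}² < 1, then for every integer N ≥ 2, ∫_{(𝕋^d)^N} exp( N |⟨φ, μ_N ⊗ μ_N⟩| ) dρ̄^{⊗N}(x_1,…,x_N) ≤ 2/(1 − γ). -/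
open MeasureTheory

lemma jw_meas {T α : Type*} [MeasurableSpace T] [MeasurableSpace α] {φ : T → T → ℝ}
    (hφ : Measurable (Function.uncurry φ)) {a b : α → T} (ha : Measurable a) (hb : Measurable b) :
    Measurable fun z => φ (a z) (b z) := hφ.comp (ha.prodMk hb)

lemma jw_expInt {T : Type*} [MeasurableSpace T] (μ : Measure T) [IsFiniteMeasure μ] {f : T → ℝ}
    (hf : Measurable f) {K : ℝ} (hK : ∀ x, |f x| ≤ K) : Integrable (fun x => Real.exp (f x)) μ := by
  refine Integrable.of_bound (hf.exp.aestronglyMeasurable) (Real.exp K) (ae_of_all _ fun x => ?_)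
  rw [Real.norm_eq_abs, abs_of_pos (Real.exp_pos _)]
  exact Real.exp_le_exp.2 ((le_abs_self _).trans (hK x))

lemma jw_int {T : Type*} [MeasurableSpace T] (μ : Measure T) [IsFiniteMeasure μ] {f : T → ℝ}
    (hf : Measurable f) {K : ℝ} (hK : ∀ x, |f x| ≤ K) : Integrable f μ :=
  Integrable.of_bound (hf.aestronglyMeasurable) K (ae_of_all _ fun x => hK x)

lemma jw_sum_abs {ι : Type*} [Fintype ι] {f : ι → ℝ} {b : ℝ} (h : ∀ i, |f i| ≤ b) :
    |∑ i, f i| ≤ Fintype.card ι * b := by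
  refine (Finset.abs_sum_le_sum_abs _ _).trans ?_
  refine (Finset.sum_le_sum (fun i _ => h i)).trans ?_
  simp

lemma jw_mgf {T ι : Type*} [MeasurableSpace T] [Fintype ι] (ρ : Measure T) [IsProbabilityMeasure ρ]
    {f : T → ℝ} (hf : Measurable f) {b : ℝ} (hb : ∀ x, |f x| ≤ b) (h0 : ∫ x, f x ∂ρ = 0)
    (t : ℝ) :
    ∫ x : ι → T, Real.exp (t * ∑ i, f (x i)) ∂(Measure.pi fun _ => ρ)
      ≤ Real.exp (Fintype.card ι * b ^ 2 * t ^ 2 / 2) := by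
  have h1 := (ProbabilityTheory.hasSubgaussianMGF_of_mem_Icc_of_integral_eq_zero (μ := ρ) (X := f)
    (a := -b) (b := b) hf.aemeasurable (ae_of_all _ fun x => abs_le.1 (hb x)) h0).mgf_le t
  have h2 : ((((‖b - -b‖₊ / 2) ^ 2 : NNReal)) : ℝ) = b ^ 2 := by
    push_cast
    rw [Real.norm_eq_abs, div_pow, sq_abs]; ring
  rw [h2, ProbabilityTheory.mgf] at h1
  simp_rw [Finset.mul_sum, Real.exp_sum]
  rw [integral_fintype_prod_eq_pow (fun x => Real.exp (t * f x))]
  refine (pow_le_pow_left₀ (integral_nonneg fun x => (Real.exp_pos _).le) h1 _).trans ?_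
  rw [← Real.exp_nat_mul]
  apply le_of_eq; congr 1; ring

lemma jw_A {T ι : Type*} [MeasurableSpace T] [Fintype ι] (ρ : Measure T) [IsProbabilityMeasure ρ]
    {f : T → ℝ} (hf : Measurable f) {b : ℝ} (hb : ∀ x, |f x| ≤ b) (h0 : ∫ x, f x ∂ρ = 0)
    {s : ℝ} (hs0 : 0 ≤ s) (hs : Fintype.card ι * b ^ 2 ≤ s) (hs2 : 2 * s < 1) :
    ∫ x : ι → T, Real.exp ((∑ i, f (x i)) ^ 2) ∂(Measure.pi fun _ => ρ) ≤ 1 / (1 - 2 * s) := by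
  set μ : Measure (ι → T) := Measure.pi fun _ => ρ
  have hSm : Measurable fun x : ι → T => ∑ i, f (x i) := by fun_prop
  have hSb : ∀ x : ι → T, |∑ i, f (x i)| ≤ Fintype.card ι * b := fun x => jw_sum_abs fun i => hb _
  have hpi : 0 < √Real.pi := Real.sqrt_pos.2 Real.pi_pos
  -- Gaussian identity
  have hG : ∀ S : ℝ, ∫⁻ u : ℝ, ENNReal.ofReal (Real.exp (-1 * u ^ 2) * Real.exp (2 * u * S))
      = ENNReal.ofReal (√Real.pi * Real.exp (S ^ 2)) := by
    intro S
    have e : ∀ u : ℝ, Real.exp (-1 * u ^ 2) * Real.exp (2 * u * S)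
        = Real.exp (-1 * (u - S) ^ 2) * Real.exp (S ^ 2) := by
      intro u; rw [← Real.exp_add, ← Real.exp_add]; congr 1; ring
    simp_rw [e]
    rw [← ofReal_integral_eq_lintegral_ofReal]
    · rw [integral_mul_const, integral_sub_right_eq_self (fun u : ℝ => Real.exp (-1 * u ^ 2)),
        integral_gaussian]; simp
    · exact ((integrable_exp_neg_mul_sq one_pos).comp_sub_right S).mul_const _
    · exact ae_of_all _ fun u => by positivity
  have key : ENNReal.ofReal (√Real.pi * ∫ x, Real.exp ((∑ i, f (x i)) ^ 2) ∂μ)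
      ≤ ENNReal.ofReal (√(Real.pi / (1 - 2 * s))) := by
    rw [← integral_const_mul, ofReal_integral_eq_lintegral_ofReal]
    rotate_left
    · refine (jw_expInt μ (hSm.pow_const 2) (K := (Fintype.card ι * b) ^ 2) fun x => ?_).const_mul _
      rw [abs_pow]; gcongr; exact hSb x
    · exact ae_of_all _ fun u => by positivity
    simp_rw [← hG]
    rw [lintegral_lintegral_swap]
    swap
    · apply Measurable.aemeasurable
      simp only [Function.uncurry_def]
      fun_prop
    rw [← integral_gaussian, ofReal_integral_eq_lintegral_ofReal
      (integrable_exp_neg_mul_sq (by linarith)) (ae_of_all _ fun u => (Real.exp_pos _).le)]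
    refine lintegral_mono fun u => ?_
    rw [← ofReal_integral_eq_lintegral_ofReal]
    rotate_left
    · refine (jw_expInt μ (hSm.const_mul (2 * u)) (K := |2 * u| * (Fintype.card ι * b))
        fun x => ?_).const_mul _
      rw [abs_mul]; gcongr; exact hSb x
    · exact ae_of_all _ fun u => by positivity
    apply ENNReal.ofReal_le_ofReal
    rw [integral_const_mul]
    refine (mul_le_mul_of_nonneg_left (jw_mgf ρ hf hb h0 (2 * u)) (Real.exp_pos _).le).trans ?_
    rw [← Real.exp_add]
    apply Real.exp_le_exp.2
    nlinarith [mul_le_mul_of_nonneg_right hs (sq_nonneg u)]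
  rw [ENNReal.ofReal_le_ofReal_iff (Real.sqrt_nonneg _), div_eq_mul_one_div,
    Real.sqrt_mul Real.pi_pos.le] at key
  refine (le_of_mul_le_mul_left key hpi).trans ?_
  rw [Real.sqrt_le_left (by apply div_nonneg <;> linarith)]
  have : 1 ≤ 1 / (1 - 2 * s) := by rw [le_div_iff₀] <;> linarith
  nlinarith

lemma jw_B {T ι κ : Type*} [MeasurableSpace T] [Fintype ι] [Fintype κ] (ρ : Measure T)
    [IsProbabilityMeasure ρ] {φ : T → T → ℝ} (hφ : Measurable (Function.uncurry φ)) {B : ℝ}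
    (hB0 : 0 ≤ B) (hB : ∀ x y, |φ x y| ≤ B) (h1 : ∀ y, ∫ x, φ x y ∂ρ = 0)
    (h2 : ∀ x, ∫ y, φ x y ∂ρ = 0) (N : ℕ) (hN : 0 < N) (hι : Fintype.card ι ≤ N)
    (hκ : Fintype.card κ ≤ N) (hB2 : 128 * B ^ 2 < 1) :
    ∫ z : (ι → T) × (κ → T), Real.exp ((8 / N : ℝ) * ∑ i, ∑ j, φ (z.1 i) (z.2 j))
      ∂((Measure.pi fun _ => ρ).prod (Measure.pi fun _ => ρ)) ≤ 1 / (1 - 128 * B ^ 2) := by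
  have hNr : (0 : ℝ) < N := by exact_mod_cast hN
  have hιr : (Fintype.card ι : ℝ) ≤ N := by exact_mod_cast hι
  have hκr : (Fintype.card κ : ℝ) ≤ N := by exact_mod_cast hκ
  -- g
  set g : (ι → T) → T → ℝ := fun x y => (8 / N : ℝ) * ∑ i, φ (x i) y with hg
  have hgm : Measurable fun z : (ι → T) × T => g z.1 z.2 := by
    refine Measurable.const_mul (Finset.measurable_sum _ fun i _ => ?_) _
    exact jw_meas hφ ((measurable_pi_apply i).comp measurable_fst) measurable_snd
  have hgm2 : ∀ x, Measurable (g x) := fun x => hgm.comp measurable_prodMk_left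
  have hgb : ∀ x y, |g x y| ≤ 8 * B := by
    intro x y
    rw [hg]; dsimp only
    rw [abs_mul, abs_of_pos (by positivity)]
    calc (8 / N : ℝ) * |∑ i, φ (x i) y| ≤ 8 / N * (Fintype.card ι * B) := by
          gcongr; exact jw_sum_abs fun i => hB _ _
      _ ≤ 8 / N * (N * B) := by gcongr
      _ = 8 * B := by field_simp
  have h8 : 8 * B ≤ 1 := by nlinarith
  have hgsq : ∀ x y, |(N : ℝ) * g x y ^ 2| ≤ N := by
    intro x y
    rw [abs_mul, abs_of_pos hNr, abs_pow]
    have := (hgb x y).trans h8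
    have := pow_le_one₀ (n := 2) (abs_nonneg _) this
    nlinarith
  have hg0 : ∀ x, ∫ y, g x y ∂ρ = 0 := by
    intro x
    rw [hg]; dsimp only
    rw [integral_const_mul, integral_finsetSum]
    · simp [h2]
    · intro i _
      exact jw_int ρ (hφ.comp measurable_prodMk_left) (fun y => hB _ _)
  have hsum : ∀ z : (ι → T) × (κ → T),
      (8 / N : ℝ) * ∑ i, ∑ j, φ (z.1 i) (z.2 j) = ∑ j, g z.1 (z.2 j) := by
    intro z
    rw [Finset.sum_comm, Finset.mul_sum]
  simp_rw [hsum]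
  have hsm : Measurable fun z : (ι → T) × (κ → T) => ∑ j, g z.1 (z.2 j) := by
    refine Finset.measurable_sum _ fun j _ => ?_
    exact hgm.comp (measurable_fst.prodMk ((measurable_pi_apply j).comp measurable_snd))
  have hI1 := jw_expInt ((Measure.pi fun _ : ι => ρ).prod (Measure.pi fun _ : κ => ρ)) hsm
    (fun z => jw_sum_abs fun j => hgb _ _)
  rw [integral_prod _ hI1]
  have hI2 := jw_expInt ((Measure.pi fun _ : ι => ρ).prod ρ) ((hgm.pow_const 2).const_mul (N : ℝ))
    (fun z => hgsq _ _)
  have step : ∀ x : ι → T, ∫ y : κ → T, Real.exp (∑ j, g x (y j)) ∂(Measure.pi fun _ => ρ)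
      ≤ ∫ y, Real.exp (N * g x y ^ 2) ∂ρ := by
    intro x
    simp_rw [Real.exp_sum]
    rw [integral_fintype_prod_eq_pow (fun y => Real.exp (g x y))]
    have hgi := jw_int ρ (hgm2 x) (hgb x)
    have hgi2 : Integrable (fun y => g x y ^ 2) ρ :=
      jw_int ρ ((hgm2 x).pow_const 2) (K := 1) (fun y => by
        rw [abs_pow]; exact pow_le_one₀ (abs_nonneg _) ((hgb x y).trans h8))
    have a1 : ∫ y, Real.exp (g x y) ∂ρ ≤ Real.exp (∫ y, g x y ^ 2 ∂ρ) := by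
      have : ∫ y, Real.exp (g x y) ∂ρ ≤ ∫ y, (1 + g x y + g x y ^ 2) ∂ρ := by
        refine integral_mono (jw_expInt ρ (hgm2 x) (hgb x))
          (((integrable_const _).add hgi).add hgi2) fun y => ?_
        have := (abs_le.1 (Real.abs_exp_sub_one_sub_id_le ((hgb x y).trans h8))).2
        dsimp only; linarith
      have q1 : ∫ y, (1 + g x y + g x y ^ 2) ∂ρ = ∫ y, (1 + g x y) ∂ρ + ∫ y, g x y ^ 2 ∂ρ :=
        integral_add ((integrable_const _).add hgi) hgi2
      have q2 : ∫ y, (1 + g x y) ∂ρ = ∫ y, (1 : ℝ) ∂ρ + ∫ y, g x y ∂ρ :=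
        integral_add (integrable_const _) hgi
      rw [q1, q2, hg0] at this
      simp only [integral_const, probReal_univ, one_smul, add_zero] at this
      refine this.trans ?_
      rw [add_comm]; exact Real.add_one_le_exp _
    refine (pow_le_pow_left₀ (integral_nonneg fun x => (Real.exp_pos _).le) a1 _).trans ?_
    rw [← Real.exp_nat_mul]
    have a2 : (Fintype.card κ : ℝ) * ∫ y, g x y ^ 2 ∂ρ ≤ ∫ y, N * g x y ^ 2 ∂ρ := by
      rw [integral_const_mul]
      exact mul_le_mul_of_nonneg_right hκr (integral_nonneg fun y => sq_nonneg _)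
    refine (Real.exp_le_exp.2 a2).trans ?_
    exact convexOn_exp.map_integral_le Real.continuous_exp.continuousOn isClosed_univ (by simp)
      (hgi2.const_mul _)
      (jw_expInt ρ (((hgm2 x).pow_const 2).const_mul (N : ℝ)) (fun z => hgsq _ _))
  refine (integral_mono hI1.integral_prod_left hI2.integral_prod_left step).trans ?_
  rw [integral_integral_swap hI2]
  have step2 : ∀ y, ∫ x : ι → T, Real.exp (N * g x y ^ 2) ∂(Measure.pi fun _ => ρ)
      ≤ 1 / (1 - 128 * B ^ 2) := by
    intro y
    have e : ∀ x : ι → T, (N : ℝ) * g x y ^ 2 = (∑ i, (8 / √N) * φ (x i) y) ^ 2 := by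
      intro x
      rw [hg]; dsimp only
      rw [← Finset.mul_sum, mul_pow, mul_pow, div_pow, div_pow, Real.sq_sqrt hNr.le]
      field_simp
    simp_rw [e]
    have := jw_A (ι := ι) ρ (f := fun x => (8 / √N) * φ x y) (b := 8 / √N * B) (s := 64 * B ^ 2)
      ((hφ.comp measurable_prodMk_right).const_mul _)
      (fun x => by
        rw [abs_mul, abs_of_nonneg (by positivity : (0:ℝ) ≤ 8 / √N)]
        exact mul_le_mul_of_nonneg_left (hB _ _) (by positivity))
      (by rw [integral_const_mul, h1, mul_zero]) (by positivity)
      (by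
        rw [mul_pow, div_pow, Real.sq_sqrt hNr.le]
        calc (Fintype.card ι : ℝ) * (8 ^ 2 / N * B ^ 2) ≤ N * (8 ^ 2 / N * B ^ 2) := by gcongr
          _ = 64 * B ^ 2 := by field_simp; ring)
      (by linarith)
    refine this.trans (le_of_eq ?_)
    ring
  refine (integral_mono hI2.swap.integral_prod_left (integrable_const _) step2).trans ?_
  simp

lemma jw_C {T : Type*} [MeasurableSpace T] (ρ : Measure T)
    [IsProbabilityMeasure ρ] {φ : T → T → ℝ} (hφ : Measurable (Function.uncurry φ)) {B : ℝ}
    (hB0 : 0 ≤ B) (hB : ∀ x y, |φ x y| ≤ B) (h1 : ∀ y, ∫ x, φ x y ∂ρ = 0)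
    (h2 : ∀ x, ∫ y, φ x y ∂ρ = 0) (N : ℕ) (hN : 0 < N) (hB2 : 128 * B ^ 2 < 1)
    (I : Finset (Fin N)) :
    ∫ x : Fin N → T, Real.exp ((8 / N : ℝ) * ∑ i : {i // i ∈ I}, ∑ j : {j // ¬ j ∈ I}, φ (x i) (x j))
      ∂(Measure.pi fun _ => ρ) ≤ 1 / (1 - 128 * B ^ 2) := by
  have := jw_B (ι := {i // i ∈ I}) (κ := {i // ¬ i ∈ I}) ρ hφ hB0 hB h1 h2 N hN
    ((Fintype.card_subtype_le _).trans (by simp)) ((Fintype.card_subtype_le _).trans (by simp)) hB2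
  have e := (measurePreserving_piEquivPiSubtypeProd (fun _ : Fin N => ρ)
    (fun i => i ∈ I)).integral_comp' (fun z : ({i // i ∈ I} → T) × ({i // ¬ i ∈ I} → T) =>
      Real.exp ((8 / N : ℝ) * ∑ i, ∑ j, φ (z.1 i) (z.2 j)))
  refine le_trans (le_of_eq ?_) (e.le.trans ?_)
  · rfl
  · refine le_trans (le_of_eq ?_) this
    congr!

lemma jw_count {N : ℕ} {i j : Fin N} (h : i ≠ j) :
    ∑ I : Finset (Fin N), (if i ∈ I ∧ j ∉ I then (1:ℝ) else 0) = 2 ^ N / 4 := by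
  classical
  have tog : ∀ (k : Fin N) (F : Finset (Fin N) → ℝ), ∑ I, F (symmDiff I {k}) = ∑ I, F I := by
    intro k F
    exact Equiv.sum_comp (Function.Involutive.toPerm (fun I : Finset (Fin N) => symmDiff I {k})
      (fun I => by simp)) F
  have mem : ∀ (k l : Fin N) (I : Finset (Fin N)), l ∈ symmDiff I {k} ↔ (if l = k then l ∉ I else l ∈ I) := by
    intro k l I
    simp only [Finset.mem_symmDiff, Finset.mem_singleton]
    split_ifs <;> simp_all
  have t1 := tog i (fun I => if i ∈ I ∧ j ∉ I then (1:ℝ) else 0)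
  have t2 := tog j (fun I => if i ∈ I ∧ j ∉ I then (1:ℝ) else 0)
  have t3 := tog j (fun I => if i ∉ I ∧ j ∉ I then (1:ℝ) else 0)
  simp only [mem, if_true, h, h.symm, if_false, not_not] at t1 t2 t3
  have tot : ∑ I : Finset (Fin N), ((if i ∈ I ∧ j ∉ I then (1:ℝ) else 0) + (if i ∉ I ∧ j ∉ I then (1:ℝ) else 0)
      + (if i ∈ I ∧ j ∈ I then (1:ℝ) else 0) + (if i ∉ I ∧ j ∈ I then (1:ℝ) else 0)) = 2 ^ N := by
    rw [Finset.sum_congr rfl (g := fun _ => (1:ℝ))]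
    · simp
    · intro I _
      by_cases a : i ∈ I <;> by_cases b : j ∈ I <;> simp [a, b]
  simp only [Finset.sum_add_distrib] at tot
  linarith

lemma jw_D {N : ℕ} (a : Fin N → Fin N → ℝ) :
    Real.exp ((2 / N : ℝ) * ∑ i, ∑ j, if i = j then 0 else a i j)
      ≤ ∑ I : Finset (Fin N), (1 / 2 ^ N : ℝ) *
        Real.exp ((8 / N : ℝ) * ∑ i : {i // i ∈ I}, ∑ j : {j // ¬ j ∈ I}, a i j) := by
  have := convexOn_exp.map_sum_le (t := (Finset.univ : Finset (Finset (Fin N))))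
    (w := fun _ => (1 / 2 ^ N : ℝ))
    (p := fun I => (8 / N : ℝ) * ∑ i : {i // i ∈ I}, ∑ j : {j // ¬ j ∈ I}, a i j)
    (fun _ _ => by positivity) (by simp) (by simp)
  simp only [smul_eq_mul] at this
  refine le_trans (le_of_eq ?_) this
  congr 1
  have e : ∀ I : Finset (Fin N), ∑ i : {i // i ∈ I}, ∑ j : {j // ¬ j ∈ I}, a i j
      = ∑ i, ∑ j, (if i ∈ I ∧ j ∉ I then (1:ℝ) else 0) * a i j := by
    intro I
    have f1 : ∀ i, ∑ j : {j // ¬ j ∈ I}, a i j = ∑ j, if j ∉ I then a i j else 0 := by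
      intro i
      rw [← Finset.sum_filter]
      exact (Finset.sum_subtype _ (by simp) _).symm
    simp_rw [f1]
    rw [← Finset.sum_subtype I (by simp) (fun i => ∑ j, if j ∉ I then a i j else 0)]
    rw [← Finset.sum_filter_add_sum_filter_not Finset.univ (fun i => i ∈ I)
      (fun i => ∑ j, (if i ∈ I ∧ j ∉ I then (1:ℝ) else 0) * a i j)]
    rw [Finset.sum_eq_zero (s := Finset.univ.filter (fun i => ¬ i ∈ I)), add_zero]
    · refine Finset.sum_congr (by simp) fun i hi => Finset.sum_congr rfl fun j _ => ?_
      simp at hi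
      simp [hi]
    · intro i hi
      simp at hi
      simp [hi]
  simp_rw [e]
  rw [← Finset.mul_sum, ← Finset.mul_sum]
  rw [Finset.sum_comm (f := fun (I : Finset (Fin N)) i =>
    ∑ j, (if i ∈ I ∧ j ∉ I then (1:ℝ) else 0) * a i j)]
  have e2 : ∀ i, ∑ I : Finset (Fin N), ∑ j, (if i ∈ I ∧ j ∉ I then (1:ℝ) else 0) * a i j
      = (2 ^ N / 4) * ∑ j, if i = j then 0 else a i j := by
    intro i
    rw [Finset.sum_comm, Finset.mul_sum]
    refine Finset.sum_congr rfl fun j _ => ?_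
    rw [← Finset.sum_mul]
    by_cases h : i = j
    · subst h; simp
    · rw [jw_count h, if_neg h]
  simp_rw [e2]
  rw [← Finset.mul_sum]
  field_simp
  ring

lemma jw_E {T : Type*} [MeasurableSpace T] (ρ : Measure T)
    [IsProbabilityMeasure ρ] {φ : T → T → ℝ} (hφ : Measurable (Function.uncurry φ)) {B : ℝ}
    (hB0 : 0 ≤ B) (hB : ∀ x y, |φ x y| ≤ B) (h1 : ∀ y, ∫ x, φ x y ∂ρ = 0)
    (h2 : ∀ x, ∫ y, φ x y ∂ρ = 0) (N : ℕ) (hN : 0 < N) (hB2 : 128 * B ^ 2 < 1) :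
    ∫ x : Fin N → T, Real.exp ((2 / N : ℝ) * ∑ i, ∑ j, if i = j then 0 else φ (x i) (x j))
      ∂(Measure.pi fun _ => ρ) ≤ 1 / (1 - 128 * B ^ 2) := by
  have hm : ∀ i j : Fin N, Measurable fun x : Fin N → T => φ (x i) (x j) := fun i j =>
    jw_meas hφ (measurable_pi_apply i) (measurable_pi_apply j)
  have hI : ∀ I : Finset (Fin N), Integrable (fun x : Fin N → T => Real.exp ((8 / N : ℝ) *
      ∑ i : {i // i ∈ I}, ∑ j : {j // ¬ j ∈ I}, φ (x i) (x j))) (Measure.pi fun _ => ρ) := by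
    intro I
    have hmI : Measurable fun x : Fin N → T => (8 / N : ℝ) *
        ∑ i : {i // i ∈ I}, ∑ j : {j // ¬ j ∈ I}, φ (x i) (x j) := by
      refine Measurable.const_mul ?_ _
      refine Finset.measurable_sum _ fun i _ => ?_
      refine Finset.measurable_sum _ fun j _ => ?_
      exact hm i j
    refine jw_expInt _ hmI (K := |(8 / N : ℝ)| *
      (Fintype.card {i // i ∈ I} * (Fintype.card {j // ¬ j ∈ I} * B))) fun x => ?_
    rw [abs_mul]
    exact mul_le_mul_of_nonneg_left (jw_sum_abs fun i => jw_sum_abs fun j => hB _ _) (abs_nonneg _)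
  refine (integral_mono_of_nonneg (ae_of_all _ fun x => (Real.exp_pos _).le)
    (integrable_finsetSum _ fun I _ => (hI I).const_mul (1 / 2 ^ N : ℝ))
    (ae_of_all _ fun x => jw_D fun i j => φ (x i) (x j))).trans ?_
  rw [integral_finsetSum _ fun I _ => (hI I).const_mul (1 / 2 ^ N : ℝ)]
  simp_rw [integral_const_mul]
  refine (Finset.sum_le_sum fun I _ => mul_le_mul_of_nonneg_left
    (jw_C ρ hφ hB0 hB h1 h2 N hN hB2 I) (by positivity)).trans ?_
  simp

lemma jw_F (D U : ℝ) : Real.exp |D + U| ≤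
    Real.cosh (2 * D) + (Real.exp (2 * U) + Real.exp (-(2 * U))) / 2 := by
  rw [← Real.cosh_eq]
  have h1 : Real.exp |D + U| ≤ 2 * Real.cosh (D + U) := by
    rw [← Real.cosh_abs, Real.cosh_eq]
    linarith [Real.exp_pos (-|D + U|)]
  have h2 : Real.cosh (2 * D) + Real.cosh (2 * U) = 2 * Real.cosh (D + U) * Real.cosh (D - U) := by
    have e1 : 2 * D = (D + U) + (D - U) := by ring
    have e2 : 2 * U = (D + U) - (D - U) := by ring
    rw [e1, e2, Real.cosh_add (D + U), Real.cosh_sub (D + U)]; ring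
  rw [h2]
  nlinarith [Real.one_le_cosh (D - U), Real.cosh_pos (D + U)]

lemma jw_main {T : Type*} [MeasurableSpace T] (ρ : Measure T)
    [IsProbabilityMeasure ρ] {φ : T → T → ℝ} (hφ : Measurable (Function.uncurry φ)) {B : ℝ}
    (hB0 : 0 ≤ B) (hB : ∀ x y, |φ x y| ≤ B) (h1 : ∀ y, ∫ x, φ x y ∂ρ = 0)
    (h2 : ∀ x, ∫ y, φ x y ∂ρ = 0) (N : ℕ) (hN : 0 < N) (hB2 : 128 * B ^ 2 < 1) :
    ∫ x : Fin N → T, Real.exp ((N : ℝ) * |((N : ℝ) ^ 2)⁻¹ * ∑ i, ∑ j, φ (x i) (x j)|)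
      ∂(Measure.pi fun _ => ρ) ≤ 2 / (1 - 128 * B ^ 2) := by
  have hNr : (0 : ℝ) < N := by exact_mod_cast hN
  have hm : ∀ i j : Fin N, Measurable fun x : Fin N → T => φ (x i) (x j) := fun i j =>
    jw_meas hφ (measurable_pi_apply i) (measurable_pi_apply j)
  set V : (Fin N → T) → ℝ :=
    fun x => (2 / N : ℝ) * ∑ i, ∑ j, if i = j then 0 else φ (x i) (x j) with hV
  have hVm : Measurable V := by
    refine Measurable.const_mul (Finset.measurable_sum _ fun i _ =>
      Finset.measurable_sum _ fun j _ => ?_) _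
    split_ifs
    · exact measurable_const
    · exact hm i j
  have hVb : ∀ x, |V x| ≤ |(2 / N : ℝ)| * (Fintype.card (Fin N) * (Fintype.card (Fin N) * B)) := by
    intro x
    rw [hV]; dsimp only
    rw [abs_mul]
    refine mul_le_mul_of_nonneg_left (jw_sum_abs fun i => jw_sum_abs fun j => ?_) (abs_nonneg _)
    split_ifs
    · simpa using hB0
    · exact hB _ _
  have hE1 : ∫ x, Real.exp (V x) ∂(Measure.pi fun _ => ρ) ≤ 1 / (1 - 128 * B ^ 2) :=
    jw_E ρ hφ hB0 hB h1 h2 N hN hB2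
  have hE2 : ∫ x, Real.exp (-V x) ∂(Measure.pi fun _ => ρ) ≤ 1 / (1 - 128 * B ^ 2) := by
    have := jw_E ρ (φ := fun x y => - φ x y) hφ.neg hB0 (by simpa using hB)
      (by simpa [integral_neg] using h1) (by simpa [integral_neg] using h2) N hN hB2
    convert this using 4 with x
    rw [hV]; dsimp only
    rw [← mul_neg, ← Finset.sum_neg_distrib]
    congr 1
    refine Finset.sum_congr rfl fun i _ => ?_
    rw [← Finset.sum_neg_distrib]
    refine Finset.sum_congr rfl fun j _ => ?_
    split_ifs <;> simp
  have hi1 := jw_expInt (Measure.pi fun _ : Fin N => ρ) hVm hVb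
  have hi2 := jw_expInt (Measure.pi fun _ : Fin N => ρ) hVm.neg (by simpa using hVb)
  have hch : Real.cosh (2 * B) ≤ 1 / (1 - 128 * B ^ 2) := by
    refine (Real.cosh_le_exp_half_sq _).trans ?_
    have : Real.exp (128 * B ^ 2) ≤ 1 / (1 - 128 * B ^ 2) :=
      Real.exp_bound_div_one_sub_of_interval (by positivity) hB2
    refine le_trans (Real.exp_le_exp.2 ?_) this
    nlinarith [sq_nonneg B]
  have pt : ∀ x : Fin N → T, Real.exp ((N : ℝ) * |((N : ℝ) ^ 2)⁻¹ * ∑ i, ∑ j, φ (x i) (x j)|)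
      ≤ 1 / (1 - 128 * B ^ 2) + (Real.exp (V x) + Real.exp (- V x)) / 2 := by
    intro x
    set D : ℝ := (N : ℝ)⁻¹ * ∑ i, φ (x i) (x i) with hD
    have hDb : |D| ≤ B := by
      rw [hD, abs_mul, abs_of_pos (by positivity)]
      calc (N : ℝ)⁻¹ * |∑ i, φ (x i) (x i)| ≤ (N : ℝ)⁻¹ * (Fintype.card (Fin N) * B) := by
            gcongr; exact jw_sum_abs fun i => hB _ _
        _ = B := by rw [Fintype.card_fin]; field_simp
    have hsplit : ∑ i, ∑ j, φ (x i) (x j) = ∑ i, φ (x i) (x i)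
        + ∑ i, ∑ j, if i = j then 0 else φ (x i) (x j) := by
      rw [← Finset.sum_add_distrib]
      refine Finset.sum_congr rfl fun i _ => ?_
      have : φ (x i) (x i) = ∑ j, if i = j then φ (x i) (x j) else 0 := by simp
      rw [this, ← Finset.sum_add_distrib]
      refine Finset.sum_congr rfl fun j _ => ?_
      split_ifs <;> simp
    have e : (N : ℝ) * |((N : ℝ) ^ 2)⁻¹ * ∑ i, ∑ j, φ (x i) (x j)| = |D + V x / 2| := by
      nth_rewrite 1 [← abs_of_pos hNr]
      rw [← abs_mul, hsplit, hD, hV]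
      congr 1
      field_simp
    rw [e]
    have := jw_F D (V x / 2)
    rw [mul_div_cancel₀ _ (two_ne_zero' ℝ)] at this
    refine this.trans ?_
    have : Real.cosh (2 * D) ≤ Real.cosh (2 * B) := by
      rw [Real.cosh_le_cosh, abs_mul 2 D, abs_mul 2 B, abs_of_nonneg hB0]
      gcongr
    linarith
  refine (integral_mono_of_nonneg (ae_of_all _ fun x => (Real.exp_pos _).le)
    ((integrable_const _).add ((hi1.add hi2).div_const 2)) (ae_of_all _ pt)).trans ?_
  have q1 : ∫ x, (1 / (1 - 128 * B ^ 2) + (Real.exp (V x) + Real.exp (- V x)) / 2)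
      ∂(Measure.pi fun _ : Fin N => ρ) = ∫ x, 1 / (1 - 128 * B ^ 2) ∂(Measure.pi fun _ : Fin N => ρ)
      + ∫ x, (Real.exp (V x) + Real.exp (- V x)) / 2 ∂(Measure.pi fun _ : Fin N => ρ) :=
    integral_add (integrable_const _) ((hi1.add hi2).div_const 2)
  have q2 : ∫ x, (Real.exp (V x) + Real.exp (- V x)) ∂(Measure.pi fun _ : Fin N => ρ)
      = ∫ x, Real.exp (V x) ∂(Measure.pi fun _ : Fin N => ρ)
      + ∫ x, Real.exp (- V x) ∂(Measure.pi fun _ : Fin N => ρ) := integral_add hi1 hi2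
  refine q1.le.trans ?_
  rw [integral_div 2, q2, integral_const, probReal_univ, one_smul]
  have : 2 / (1 - 128 * B ^ 2) = 1 / (1 - 128 * B ^ 2) + 1 / (1 - 128 * B ^ 2) := by ring
  linarith

/-- **Large deviation estimate of Jabin–Wang, absolute-value version.**
There exists a universal constant `C > 0` such that for every `d ≥ 1`, every probability
measure `ρ̄` on the torus `𝕋^d`, and every bounded measurable function
`φ : 𝕋^d × 𝕋^d → ℝ` (with pointwise bound `B`) satisfying the cancellations
`∫ φ(x,y) dρ̄(x) = 0` for all `y` and `∫ φ(x,y) dρ̄(y) = 0` for all `x`: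
if `γ := C‖φ‖_∞² < 1` then for every `N ≥ 2`,
`∫ exp(N |⟨φ, μ_N ⊗ μ_N⟩|) dρ̄^{⊗N} ≤ 2/(1 − γ)`,
where `⟨φ, μ_N ⊗ μ_N⟩ = N⁻² ∑_{i,j} φ(x_i, x_j)`. -/
theorem statement1 :
    ∃ C : ℝ, 0 < C ∧
      ∀ (d : ℕ), 1 ≤ d →
      ∀ (ρ : Measure (Torus d)), IsProbabilityMeasure ρ →
      ∀ (φ : Torus d → Torus d → ℝ), Measurable (Function.uncurry φ) →
      ∀ B : ℝ, (∀ x y, |φ x y| ≤ B) →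
        (∀ y, ∫ x, φ x y ∂ρ = 0) →
        (∀ x, ∫ y, φ x y ∂ρ = 0) →
        C * B ^ 2 < 1 →
        ∀ N : ℕ, 2 ≤ N →
          ∫ x : Fin N → Torus d,
              Real.exp ((N : ℝ) *
                |((N : ℝ) ^ 2)⁻¹ * ∑ i : Fin N, ∑ j : Fin N, φ (x i) (x j)|)
            ∂(Measure.pi fun _ => ρ)
          ≤ 2 / (1 - C * B ^ 2) := by
  refine ⟨128, by norm_num, ?_⟩
  intro d _ ρ hρ φ hφ B hB h1 h2 hC N hN
  exact jw_main ρ hφ ((abs_nonneg _).trans (hB (fun _ => 0) (fun _ => 0))) hB h1 h2 N (by lia) hC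
end

section
/- Let d ≥ 1, let ρ̄ be a probability measure on the torus 𝕋^d, and let φ : 𝕋^d × 𝕋^d → ℝ be a bounded measurable function satisfying the cancellation ∫_{𝕋^d × 𝕋^d} φ(x,y) dρ̄(x) dρ̄(y) = 0. Set α₀ := e⁹ ‖φ‖_{L^∞}² and β₀ := 4e ‖φ‖_{L^∞}², and assume α₀ < 1 and β₀ < 1. Then for every integer N ≥ 1, ∫_{(𝕋^d)^N} exp( N |⟨φ, μ_N ⊗ μ_N⟩|² ) dρ̄^{⊗N}(x_1,…,x_N) ≤ 1 + α₀/(1 − α₀) + β₀/(1 − β₀). -/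
open MeasureTheory

open ProbabilityTheory

lemma aux_gauss_s2 (a : ℝ) (ha0 : 0 ≤ a) (ha : 2 * a < 1) :
    Integrable (fun g : ℝ => Real.exp (a * g ^ 2)) (gaussianReal 0 1) ∧
    ∫ g, Real.exp (a * g ^ 2) ∂(gaussianReal 0 1) ≤ 1 / (1 - 2 * a) := by
  have key : ∀ x : ℝ, gaussianPDFReal 0 1 x • Real.exp (a * x ^ 2)
      = (√(2 * Real.pi))⁻¹ * Real.exp (-(1 / 2 - a) * x ^ 2) := by
    intro x
    simp only [gaussianPDFReal, smul_eq_mul, NNReal.coe_one, mul_one, sub_zero]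
    rw [mul_assoc, ← Real.exp_add]
    congr 2
    ring
  have hb : 0 < 1 / 2 - a := by linarith
  constructor
  · rw [gaussianReal_of_var_ne_zero 0 (one_ne_zero),
      integrable_withDensity_iff_integrable_smul' (measurable_gaussianPDF 0 1)
        (ae_of_all _ fun _ => gaussianPDF_lt_top)]
    simp only [toReal_gaussianPDF, key]
    exact (integrable_exp_neg_mul_sq hb).const_mul _
  · rw [integral_gaussianReal_eq_integral_smul one_ne_zero]
    simp only [key]
    rw [integral_const_mul, integral_gaussian]
    have hpi := Real.pi_pos
    rw [← Real.sqrt_inv, ← Real.sqrt_mul (by positivity)]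
    have : (2 * Real.pi)⁻¹ * (Real.pi / (1 / 2 - a)) = 1 / (1 - 2 * a) := by
      have : (1 - 2 * a) ≠ 0 := by linarith
      have h2 : (1 / 2 - a) ≠ 0 := hb.ne'
      field_simp
    rw [this]
    have h1 : 1 ≤ 1 / (1 - 2 * a) := by
      rw [le_div_iff₀ (by linarith)]; linarith
    rw [Real.sqrt_le_left (by linarith)]
    nlinarith

lemma aux_mcd {T : Type*} [MeasurableSpace T] (ρ : Measure T) [IsProbabilityMeasure ρ]
    (c : ℝ) (t : ℝ) (M : ℝ) : ∀ (n : ℕ) (F : (Fin n → T) → ℝ), Measurable F →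
    (∀ x, |F x| ≤ M) → (∀ x k a, |F (Function.update x k a) - F x| ≤ c) →
    ∫ x, Real.exp (t * (F x - ∫ z, F z ∂(Measure.pi fun _ => ρ))) ∂(Measure.pi fun _ => ρ)
      ≤ Real.exp (n * (c ^ 2 * t ^ 2 / 2)) := by
  have : Nonempty T := by
    by_contra h
    rw [not_nonempty_iff] at h
    have := measure_univ (μ := ρ)
    simp [Set.univ_eq_empty_iff.2 h] at this
  obtain ⟨a0⟩ := this
  intro n
  induction n with
  | zero =>
    intro F hF hM hc
    have : ∀ x : Fin 0 → T, F x = F default := fun x => congrArg F (Subsingleton.elim _ _)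
    simp [this]
  | succ n ih =>
    intro F hF hM hc
    have hcons : Measurable (fun p : T × (Fin n → T) => (Fin.cons p.1 p.2 : Fin (n+1) → T)) := by
      have := (MeasurableEquiv.piFinSuccAbove (fun _ : Fin (n+1) => T) 0).symm.measurable
      convert this using 1
      ext p : 1
      simp [MeasurableEquiv.piFinSuccAbove_symm_apply, Fin.insertNthEquiv]
    have htr : ∀ f : (Fin (n+1) → T) → ℝ, ∫ x, f x ∂(Measure.pi fun _ => ρ)
        = ∫ p : T × (Fin n → T), f (Fin.cons p.1 p.2) ∂(ρ.prod (Measure.pi fun _ => ρ)) := by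
      intro f
      rw [← ((measurePreserving_piFinSuccAbove (fun _ : Fin (n+1) => ρ) 0).symm).integral_comp']
      simp [MeasurableEquiv.piFinSuccAbove_symm_apply, Fin.insertNthEquiv]
    have hFm : Measurable (fun p : T × (Fin n → T) => F (Fin.cons p.1 p.2)) := hF.comp hcons
    have hFi : Integrable (fun p : T × (Fin n → T) => F (Fin.cons p.1 p.2))
        (ρ.prod (Measure.pi fun _ => ρ)) :=
      Integrable.of_bound hFm.aestronglyMeasurable M (ae_of_all _ fun p => hM _)
    have hFy : ∀ y : Fin n → T, Measurable (fun a => F (Fin.cons a y)) := fun y =>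
      hFm.comp (measurable_id.prodMk measurable_const)
    have hFyi : ∀ y : Fin n → T, Integrable (fun a => F (Fin.cons a y)) ρ := fun y =>
      Integrable.of_bound (hFy y).aestronglyMeasurable M (ae_of_all _ fun p => hM _)
    set G : (Fin n → T) → ℝ := fun y => ∫ a, F (Fin.cons a y) ∂ρ with hG
    have hGm : Measurable G := by
      have := hFm.stronglyMeasurable.integral_prod_left' (μ := ρ)
      exact this.measurable
    have hGM : ∀ y, |G y| ≤ M := by
      intro y
      have := norm_integral_le_of_norm_le_const (μ := ρ) (f := fun a => F (Fin.cons a y)) (C := M)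
        (ae_of_all _ fun p => hM _)
      simpa using this
    have hGc : ∀ x k a, |G (Function.update x k a) - G x| ≤ c := by
      intro x k a
      simp only [hG]
      rw [← integral_sub (hFyi _) (hFyi _)]
      have := norm_integral_le_of_norm_le_const (μ := ρ)
        (f := fun b => F (Fin.cons b (Function.update x k a)) - F (Fin.cons b x)) (C := c)
        (ae_of_all _ fun b => by
          rw [Fin.cons_update]; exact hc _ _ _)
      simpa using this
    have hm : ∫ z, F z ∂(Measure.pi fun _ => ρ) = ∫ y, G y ∂(Measure.pi fun _ => ρ) := by
      rw [htr, integral_prod_symm _ hFi]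
    rw [hm, htr]
    set m := ∫ y, G y ∂(Measure.pi fun _ => ρ) with hmdef
    have hexpb : ∀ u v : ℝ, |u| ≤ v → Real.exp (t * (u - m)) ≤ Real.exp (|t| * (v + |m|)) := by
      intro u v h
      apply Real.exp_le_exp.2
      calc t * (u - m) ≤ |t * (u - m)| := le_abs_self _
        _ = |t| * |u - m| := abs_mul _ _
        _ ≤ _ := by
          apply mul_le_mul_of_nonneg_left _ (abs_nonneg _)
          exact (abs_sub _ _).trans (by linarith)
    rw [integral_prod_symm]
    swap
    · refine Integrable.of_bound
        ((hFm.sub_const m).const_mul t).exp.aestronglyMeasurable (Real.exp (|t| * (M + |m|)))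
        (ae_of_all _ fun p => ?_)
      rw [Real.norm_eq_abs, Real.abs_exp]
      exact hexpb _ _ (hM _)
    have hin : ∀ y : Fin n → T, ∫ a, Real.exp (t * (F (Fin.cons a y) - m)) ∂ρ
        ≤ Real.exp (c ^ 2 * t ^ 2 / 2) * Real.exp (t * (G y - m)) := by
      intro y
      have h1 := (hasSubgaussianMGF_of_mem_Icc (μ := ρ) (X := fun a => F (Fin.cons a y))
        (a := F (Fin.cons a0 y) - c) (b := F (Fin.cons a0 y) + c) (hFy y).aemeasurable
        (ae_of_all _ fun a => by
          have := hc (Fin.cons a0 y) 0 a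
          rw [Fin.update_cons_zero, abs_le] at this
          constructor <;> linarith)).mgf_le t
      have h2 : (((‖F (Fin.cons a0 y) + c - (F (Fin.cons a0 y) - c)‖₊ / 2) ^ 2 : NNReal) : ℝ)
          = c ^ 2 := by
        push_cast
        rw [show F (Fin.cons a0 y) + c - (F (Fin.cons a0 y) - c) = 2 * c by ring, div_pow]
        rw [Real.norm_eq_abs, sq_abs]
        ring
      rw [h2] at h1
      have h3 : ∫ a, Real.exp (t * (F (Fin.cons a y) - m)) ∂ρ
          = mgf (fun a => F (Fin.cons a y) - ∫ a, F (Fin.cons a y) ∂ρ) ρ t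
            * Real.exp (t * (G y - m)) := by
        simp only [mgf]
        rw [← integral_mul_const]
        congr 1
        ext a
        rw [← Real.exp_add]
        congr 1
        simp only [hG]
        ring
      rw [h3]
      exact mul_le_mul_of_nonneg_right h1 (Real.exp_pos _).le
    calc _ ≤ ∫ y, Real.exp (c ^ 2 * t ^ 2 / 2) * Real.exp (t * (G y - m))
          ∂(Measure.pi fun _ => ρ) := by
          apply integral_mono_of_nonneg
          · exact ae_of_all _ fun y => integral_nonneg fun a => (Real.exp_pos _).le
          · apply Integrable.const_mul
            refine Integrable.of_bound (by fun_prop) (Real.exp (|t| * (M + |m|)))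
              (ae_of_all _ fun p => ?_)
            rw [Real.norm_eq_abs, Real.abs_exp]
            exact hexpb _ _ (hGM _)
          · exact ae_of_all _ hin
      _ ≤ Real.exp (c ^ 2 * t ^ 2 / 2) * Real.exp (n * (c ^ 2 * t ^ 2 / 2)) := by
          rw [integral_const_mul]
          exact mul_le_mul_of_nonneg_left (ih G hGm hGM hGc) (Real.exp_pos _).le
      _ = _ := by
          rw [← Real.exp_add]
          push_cast
          congr 1
          ring

lemma aux_sq_s2 {Ω : Type*} [MeasurableSpace Ω] (P : Measure Ω) [IsProbabilityMeasure P]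
    (Y : Ω → ℝ) (hY : Measurable Y) (K : ℝ) (hK : ∀ x, |Y x| ≤ K) (s : ℝ) (hs0 : 0 ≤ s)
    (hs : 4 * s < 1) (h : ∀ t, ∫ x, Real.exp (t * Y x) ∂P ≤ Real.exp (s * t ^ 2 / 2)) :
    ∫ x, Real.exp (2 * Y x ^ 2) ∂P ≤ 1 / (1 - 4 * s) := by
  have h1 : ∀ x, Real.exp (2 * Y x ^ 2)
      = ∫ g, Real.exp ((2 * g) * Y x) ∂(gaussianReal 0 1) := by
    intro x
    have := mgf_gaussianReal (p := gaussianReal 0 1) (X := id) (μ := 0) (v := 1)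
      (by simp) (2 * Y x)
    simp only [mgf, id] at this
    rw [show (fun g : ℝ => Real.exp ((2 * g) * Y x)) = fun g => Real.exp (2 * Y x * g) by
      ext g; congr 1; ring, this]
    congr 1
    simp
    ring
  simp_rw [h1]
  rw [integral_integral_swap]
  swap
  · have hi : Integrable (fun g : ℝ => Real.exp ((2 * K) * g) + Real.exp ((-(2 * K)) * g))
        (gaussianReal 0 1) :=
      (integrable_exp_mul_gaussianReal _).add (integrable_exp_mul_gaussianReal _)
    refine (hi.comp_snd P).mono (by
      apply Measurable.aestronglyMeasurable
      simp only [Function.uncurry_def]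
      fun_prop) (ae_of_all _ fun p => ?_)
    simp only [Function.uncurry_def]
    rw [Real.norm_eq_abs, Real.abs_exp, Real.norm_eq_abs, abs_of_pos (by positivity)]
    have h2 : 2 * p.2 * Y p.1 ≤ |2 * K * p.2| := by
      refine (le_abs_self _).trans ?_
      rw [show 2 * K * p.2 = (2 * p.2) * K by ring, abs_mul, abs_mul _ K]
      exact mul_le_mul_of_nonneg_left ((hK _).trans (le_abs_self _)) (abs_nonneg _)
    rcases abs_cases (2 * K * p.2) with ⟨h3, -⟩ | ⟨h3, -⟩ <;> rw [h3] at h2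
    · have := Real.exp_le_exp.2 h2
      have := Real.exp_pos (-(2 * K) * p.2)
      linarith
    · rw [← neg_mul] at h2
      have := Real.exp_le_exp.2 h2
      have := Real.exp_pos (2 * K * p.2)
      linarith
  obtain ⟨hi, hle⟩ := aux_gauss_s2 (2 * s) (by linarith) (by linarith)
  refine le_trans ?_ (hle.trans_eq (by ring))
  apply integral_mono_of_nonneg
  · exact ae_of_all _ fun y => integral_nonneg fun a => (Real.exp_pos _).le
  · exact hi
  · refine ae_of_all _ fun g => (h (2 * g)).trans_eq ?_
    congr 1
    ring

/-- **Second large deviation estimate (Lemma 2.3 of Wang–Zhao–Zhu).**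
Let `ρ̄` be a probability measure on the torus `𝕋^d` (`d ≥ 1`) and let
`φ : 𝕋^d × 𝕋^d → ℝ` be bounded measurable (pointwise bound `B`) with the cancellation
`∬ φ(x,y) dρ̄(x) dρ̄(y) = 0`.  Set `α₀ := e⁹ ‖φ‖_∞²` and `β₀ := 4e ‖φ‖_∞²` and assume
`α₀ < 1`, `β₀ < 1`.  Then for every `N ≥ 1`,
`∫ exp(N |⟨φ, μ_N ⊗ μ_N⟩|²) dρ̄^{⊗N} ≤ 1 + α₀/(1 − α₀) + β₀/(1 − β₀)`,
where `⟨φ, μ_N ⊗ μ_N⟩ = N⁻² ∑_{i,j} φ(x_i, x_j)`. -/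
theorem statement2 (d : ℕ) (hd : 1 ≤ d)
    (ρ : Measure (Torus d)) [IsProbabilityMeasure ρ]
    (φ : Torus d → Torus d → ℝ) (hφmeas : Measurable (Function.uncurry φ))
    (B : ℝ) (hφbdd : ∀ x y, |φ x y| ≤ B)
    (hcancel : ∫ x, ∫ y, φ x y ∂ρ ∂ρ = 0)
    (hα₀ : Real.exp 9 * B ^ 2 < 1) (hβ₀ : 4 * Real.exp 1 * B ^ 2 < 1) :
    ∀ N : ℕ, 1 ≤ N →
      ∫ x : Fin N → Torus d,
          Real.exp ((N : ℝ) *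
            |((N : ℝ) ^ 2)⁻¹ * ∑ i : Fin N, ∑ j : Fin N, φ (x i) (x j)| ^ 2)
        ∂(Measure.pi fun _ => ρ)
      ≤ 1 + (Real.exp 9 * B ^ 2) / (1 - Real.exp 9 * B ^ 2)
          + (4 * Real.exp 1 * B ^ 2) / (1 - 4 * Real.exp 1 * B ^ 2) := by
  intro N hN
  have hNpos : (0 : ℝ) < N := by exact_mod_cast hN
  have hneT : Nonempty (Torus d) := inferInstance
  obtain ⟨a0⟩ := hneT
  have hB : 0 ≤ B := (abs_nonneg _).trans (hφbdd a0 a0)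
  set P : Measure (Fin N → Torus d) := Measure.pi fun _ => ρ with hP
  set F : (Fin N → Torus d) → ℝ :=
    fun x => ((N : ℝ) ^ 2)⁻¹ * ∑ i : Fin N, ∑ j : Fin N, φ (x i) (x j) with hFdef
  have hterm : ∀ i j : Fin N, Measurable (fun x : Fin N → Torus d => φ (x i) (x j)) :=
    fun i j => by
      have h : Measurable (fun x : Fin N → Torus d => (x i, x j)) :=
        (measurable_pi_apply i).prodMk (measurable_pi_apply j)
      exact hφmeas.comp h
  have hFm : Measurable F := by
    apply Measurable.const_mul
    exact Finset.measurable_sum _ fun i _ => Finset.measurable_sum _ fun j _ => hterm i j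
  have hFB : ∀ x, |F x| ≤ B := by
    intro x
    simp only [hFdef]
    rw [abs_mul, abs_of_pos (by positivity), inv_mul_le_iff₀ (by positivity)]
    calc _ ≤ ∑ i : Fin N, ∑ j : Fin N, |φ (x i) (x j)| :=
          (Finset.abs_sum_le_sum_abs _ _).trans
            (Finset.sum_le_sum fun i _ => Finset.abs_sum_le_sum_abs _ _)
      _ ≤ ∑ i : Fin N, ∑ j : Fin N, B :=
          Finset.sum_le_sum fun i _ => Finset.sum_le_sum fun j _ => hφbdd _ _
      _ = _ := by simp; ring
  have hFc : ∀ x k a, |F (Function.update x k a) - F x| ≤ 4 * B / N := by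
    intro x k a
    simp only [hFdef]
    rw [← mul_sub, abs_mul, abs_of_pos (by positivity), inv_mul_le_iff₀ (by positivity),
      ← Finset.sum_sub_distrib]
    simp_rw [← Finset.sum_sub_distrib]
    calc _ ≤ ∑ i : Fin N, ∑ j : Fin N, |φ (Function.update x k a i) (Function.update x k a j)
            - φ (x i) (x j)| :=
          (Finset.abs_sum_le_sum_abs _ _).trans
            (Finset.sum_le_sum fun i _ => Finset.abs_sum_le_sum_abs _ _)
      _ ≤ ∑ i : Fin N, ∑ j : Fin N, ((if i = k then 2 * B else 0) + if j = k then 2 * B else 0) := by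
          refine Finset.sum_le_sum fun i _ => Finset.sum_le_sum fun j _ => ?_
          have h2 : ∀ a b a' b', |φ a b - φ a' b'| ≤ 2 * B := fun a b a' b' =>
            (abs_sub _ _).trans (by linarith [hφbdd a b, hφbdd a' b'])
          by_cases hi : i = k
          · rw [if_pos hi]
            refine (h2 _ _ _ _).trans ?_
            split_ifs <;> linarith
          · by_cases hj : j = k
            · rw [if_pos hj, if_neg hi]
              refine (h2 _ _ _ _).trans ?_
              linarith
            · rw [if_neg hi, if_neg hj, Function.update_of_ne hi, Function.update_of_ne hj]
              simp
      _ = _ := by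
          simp [Finset.sum_add_distrib]
          field_simp
          ring
  set m := ∫ x, F x ∂P with hm
  have hmean : |m| ≤ B / N := by
    have hti : ∀ i j : Fin N, Integrable (fun x : Fin N → Torus d => φ (x i) (x j)) P :=
      fun i j => Integrable.of_bound (hterm i j).aestronglyMeasurable B
        (ae_of_all _ fun p => hφbdd _ _)
    have hd : ∀ i j : Fin N, |∫ x, φ (x i) (x j) ∂P| ≤ if i = j then B else 0 := by
      intro i j
      split_ifs with hij
      · have := norm_integral_le_of_norm_le_const (μ := P)
          (f := fun x => φ (x i) (x j)) (C := B) (ae_of_all _ fun p => hφbdd _ _)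
        simpa using this
      · have hind : iIndepFun (fun (i : Fin N) (ω : Fin N → Torus d) => id (ω i)) P :=
          iIndepFun_pi (μ := fun _ : Fin N => ρ) (X := fun _ => id) fun i => aemeasurable_id
        have h1 := (hind.indepFun hij).map_prod_eq_prod_map_map
          (measurable_pi_apply i).aemeasurable (measurable_pi_apply j).aemeasurable
        have hmap : ∀ i : Fin N, P.map (fun ω => ω i) = ρ := fun i =>
          (measurePreserving_eval (fun _ : Fin N => ρ) i).map_eq
        rw [hmap, hmap] at h1
        have h2 : ∫ x, φ (x i) (x j) ∂P = ∫ p, Function.uncurry φ p ∂(ρ.prod ρ) := by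
          rw [← h1, integral_map]
          · rfl
          · exact ((measurable_pi_apply i).prodMk (measurable_pi_apply j)).aemeasurable
          · exact hφmeas.aestronglyMeasurable
        rw [h2, integral_prod]
        · simp only [Function.uncurry_apply_pair]
          rw [hcancel]; simp
        · exact Integrable.of_bound hφmeas.aestronglyMeasurable B
            (ae_of_all _ fun p => hφbdd _ _)
    have hm2 : m = ((N : ℝ) ^ 2)⁻¹ * ∑ i : Fin N, ∑ j : Fin N, ∫ x, φ (x i) (x j) ∂P := by
      rw [hm]
      simp only [hFdef]
      rw [integral_const_mul, integral_finsetSum _ fun i _ => integrable_finsetSum _ fun j _ => hti i j]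
      congr 1
      refine Finset.sum_congr rfl fun i _ => ?_
      rw [integral_finsetSum _ fun j _ => hti i j]
    rw [hm2, abs_mul, abs_of_pos (by positivity), inv_mul_le_iff₀ (by positivity)]
    calc _ ≤ ∑ i : Fin N, ∑ j : Fin N, |∫ x, φ (x i) (x j) ∂P| :=
          (Finset.abs_sum_le_sum_abs _ _).trans
            (Finset.sum_le_sum fun i _ => Finset.abs_sum_le_sum_abs _ _)
      _ ≤ ∑ i : Fin N, ∑ j : Fin N, if i = j then B else 0 :=
          Finset.sum_le_sum fun i _ => Finset.sum_le_sum fun j _ => hd i j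
      _ = _ := by
          simp
          field_simp
  have he9 : (512 : ℝ) ≤ Real.exp 9 := by
    have h1 : (2 : ℝ) ≤ Real.exp 1 := by have := Real.add_one_le_exp 1; linarith
    have h2 : Real.exp 9 = Real.exp 1 ^ 9 := by rw [← Real.exp_nat_mul]; norm_num
    rw [h2]
    calc (512 : ℝ) = 2 ^ 9 := by norm_num
      _ ≤ _ := by gcongr
  have hb0 : 0 ≤ B ^ 2 := sq_nonneg B
  have hbs : 512 * B ^ 2 ≤ Real.exp 9 * B ^ 2 := mul_le_mul_of_nonneg_right he9 hb0
  have hsq : ∫ x, Real.exp (2 * (√N * (F x - m)) ^ 2) ∂P ≤ 1 / (1 - 4 * (16 * B ^ 2)) := by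
    apply aux_sq_s2 P (fun x => √N * (F x - m)) (by fun_prop) (√N * (B + |m|))
    · intro x
      rw [abs_mul, abs_of_nonneg (Real.sqrt_nonneg _)]
      apply mul_le_mul_of_nonneg_left _ (Real.sqrt_nonneg _)
      exact (abs_sub _ _).trans (by linarith [hFB x])
    · positivity
    · linarith
    · intro t
      have := aux_mcd ρ (4 * B / N) (t * √N) B N F hFm hFB hFc
      refine le_trans (le_of_eq ?_) (this.trans_eq ?_)
      · simp only [hm, hP, mul_assoc]
      · congr 1
        rw [mul_pow, Real.sq_sqrt hNpos.le]
        field_simp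
        ring
  have hpt : ∀ x, Real.exp ((N : ℝ) * |F x| ^ 2)
      ≤ Real.exp (2 * B ^ 2) * Real.exp (2 * (√N * (F x - m)) ^ 2) := by
    intro x
    rw [← Real.exp_add]
    apply Real.exp_le_exp.2
    rw [mul_pow, Real.sq_sqrt hNpos.le, sq_abs]
    have h1 : (N : ℝ) * m ^ 2 ≤ B ^ 2 := by
      have h2 : m ^ 2 ≤ (B / N) ^ 2 := by
        rw [← sq_abs m]; gcongr
      have hN1 : (1 : ℝ) ≤ N := by exact_mod_cast hN
      calc (N : ℝ) * m ^ 2 ≤ N * (B / N) ^ 2 := by gcongr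
        _ = B ^ 2 / N := by field_simp
        _ ≤ B ^ 2 := div_le_self hb0 hN1
    nlinarith [mul_nonneg hNpos.le (sq_nonneg (F x - 2 * m))]
  have hmain : ∫ x, Real.exp ((N : ℝ) * |F x| ^ 2) ∂P
      ≤ Real.exp (2 * B ^ 2) * (1 / (1 - 4 * (16 * B ^ 2))) := by
    calc _ ≤ ∫ x, Real.exp (2 * B ^ 2) * Real.exp (2 * (√N * (F x - m)) ^ 2) ∂P := by
          apply integral_mono_of_nonneg
          · exact ae_of_all _ fun y => (Real.exp_pos _).le
          · apply Integrable.const_mul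
            refine Integrable.of_bound (by
              apply Measurable.aestronglyMeasurable
              fun_prop) (Real.exp (2 * (√N * (B + |m|)) ^ 2)) (ae_of_all _ fun x => ?_)
            rw [Real.norm_eq_abs, Real.abs_exp]
            apply Real.exp_le_exp.2
            rw [mul_pow, mul_pow, ← sq_abs (F x - m)]
            have : |F x - m| ≤ B + |m| := (abs_sub _ _).trans (by linarith [hFB x])
            gcongr
          · exact ae_of_all _ hpt
      _ ≤ _ := by
          rw [integral_const_mul]
          exact mul_le_mul_of_nonneg_left hsq (Real.exp_pos _).le
  refine hmain.trans ?_
  have hexp : Real.exp (2 * B ^ 2) ≤ 1 / (1 - 2 * B ^ 2) := by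
    have h1 := Real.add_one_le_exp (-(2 * B ^ 2))
    rw [Real.exp_neg] at h1
    rw [le_div_iff₀ (by linarith)]
    calc _ ≤ Real.exp (2 * B ^ 2) * (Real.exp (2 * B ^ 2))⁻¹ := by gcongr; linarith
      _ = 1 := mul_inv_cancel₀ (Real.exp_pos _).ne'
  have hβ : 0 ≤ (4 * Real.exp 1 * B ^ 2) / (1 - 4 * Real.exp 1 * B ^ 2) :=
    div_nonneg (by positivity) (by linarith)
  have hα : 1 + (Real.exp 9 * B ^ 2) / (1 - Real.exp 9 * B ^ 2)
      = 1 / (1 - Real.exp 9 * B ^ 2) := by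
    have : 1 - Real.exp 9 * B ^ 2 ≠ 0 := by linarith
    field_simp
    ring
  rw [hα]
  have h64 : 0 < 1 - 4 * (16 * B ^ 2) := by linarith
  have h2' : 0 < 1 - 2 * B ^ 2 := by linarith
  calc _ ≤ 1 / (1 - 2 * B ^ 2) * (1 / (1 - 4 * (16 * B ^ 2))) := by gcongr
    _ = 1 / ((1 - 2 * B ^ 2) * (1 - 4 * (16 * B ^ 2))) := by rw [one_div_mul_one_div]
    _ ≤ 1 / (1 - Real.exp 9 * B ^ 2) := by
        apply one_div_le_one_div_of_le (by linarith)
        nlinarith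
    _ ≤ _ := by linarith
end

section
/- For all integers m ≥ 1 and N with 4m ≤ N, one has (1/(m! · N^{3m})) · Σ_{l=0}^{2m} Σ_{p=1}^{⌊(4m−l)/2⌋} C(N,l) · C(N−l,p) · C(2m,l) · 2^l · l! · p^{4m−l} ≤ e^{9m}, where C(a,b) denotes the binomial coefficient 'a choose b'. -/
theorem aux_pow (p : ℕ) : (p : ℝ) ^ p ≤ (Nat.factorial p : ℝ) * Real.exp p := by
  have h := Real.pow_div_factorial_le_exp (p : ℝ) (Nat.cast_nonneg p) p
  have hp : (0 : ℝ) < Nat.factorial p := by exact_mod_cast Nat.factorial_pos p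
  rw [div_le_iff₀ hp] at h
  linarith

theorem aux_term (m N l p : ℕ) (hm : 1 ≤ m) (hN : 4 * m ≤ N) (hl : l ≤ 2 * m)
    (hp : p ≤ (4 * m - l) / 2) :
    (Nat.choose N l : ℝ) * (Nat.choose (N - l) p : ℝ) *
              (Nat.choose (2 * m) l : ℝ) * 2 ^ l * (Nat.factorial l : ℝ) *
              (p : ℝ) ^ (4 * m - l) ≤
    ((Nat.factorial m : ℝ) * (N : ℝ) ^ (3 * m)) * (Real.exp (3 * m) * 2 ^ m) *
      ((2 : ℝ) ^ l * (Nat.choose (2 * m) l : ℝ)) := by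
  obtain ⟨d, hd⟩ : ∃ d, 3 * m = l + p + d := ⟨3 * m - (l + p), by omega⟩
  have e1 : 4 * m - l = p + (d + m) := by omega
  have h1 : (Nat.choose N l : ℝ) * (Nat.factorial l : ℝ) ≤ (N : ℝ) ^ l := by
    have := Nat.descFactorial_le_pow N l
    rw [Nat.descFactorial_eq_factorial_mul_choose] at this
    rw [mul_comm]
    exact_mod_cast this
  have h2 : (Nat.choose (N - l) p : ℝ) * (Nat.factorial p : ℝ) ≤ (N : ℝ) ^ p := by
    have := (Nat.descFactorial_le_pow (N - l) p).trans (Nat.pow_le_pow_left (Nat.sub_le N l) p)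
    rw [Nat.descFactorial_eq_factorial_mul_choose] at this
    rw [mul_comm]
    exact_mod_cast this
  have h3 : (p : ℝ) ^ p ≤ (Nat.factorial p : ℝ) * Real.exp (2 * m) := by
    refine (aux_pow p).trans ?_
    have : (p : ℝ) ≤ 2 * m := by
      have : p ≤ 2 * m := by omega
      exact_mod_cast this
    gcongr
  have h4 : (p : ℝ) ^ (d + m) ≤ (N : ℝ) ^ d * (2 ^ m * ((Nat.factorial m : ℝ) * Real.exp m)) := by
    have a : (p : ℝ) ≤ 2 * m := by
      have : p ≤ 2 * m := by omega
      exact_mod_cast this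
    have b : (p : ℝ) ≤ N := by
      have : p ≤ N := by omega
      exact_mod_cast this
    calc (p : ℝ) ^ (d + m) = (p : ℝ) ^ d * (p : ℝ) ^ m := pow_add _ _ _
      _ ≤ (N : ℝ) ^ d * (2 * m : ℝ) ^ m := by gcongr
      _ = (N : ℝ) ^ d * (2 ^ m * (m : ℝ) ^ m) := by rw [mul_pow]
      _ ≤ _ := by
        gcongr
        exact aux_pow m
  have e2 : Real.exp (3 * m) = Real.exp (2 * m) * Real.exp m := by
    rw [← Real.exp_add]; congr 1; ring
  rw [e1, hd, e2]
  calc _ = ((Nat.choose N l : ℝ) * (Nat.factorial l : ℝ)) * ((Nat.choose (N - l) p : ℝ) *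
        (p : ℝ) ^ p) * (p : ℝ) ^ (d + m) * (2 ^ l * (Nat.choose (2 * m) l : ℝ)) := by ring
    _ ≤ (N : ℝ) ^ l * ((Nat.choose (N - l) p : ℝ) * ((Nat.factorial p : ℝ) * Real.exp (2 * m))) *
        ((N : ℝ) ^ d * (2 ^ m * ((Nat.factorial m : ℝ) * Real.exp m))) *
        (2 ^ l * (Nat.choose (2 * m) l : ℝ)) := by gcongr
    _ = (N : ℝ) ^ l * (((Nat.choose (N - l) p : ℝ) * (Nat.factorial p : ℝ)) * Real.exp (2 * m)) *
        ((N : ℝ) ^ d * (2 ^ m * ((Nat.factorial m : ℝ) * Real.exp m))) *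
        (2 ^ l * (Nat.choose (2 * m) l : ℝ)) := by ring
    _ ≤ (N : ℝ) ^ l * ((N : ℝ) ^ p * Real.exp (2 * m)) *
        ((N : ℝ) ^ d * (2 ^ m * ((Nat.factorial m : ℝ) * Real.exp m))) *
        (2 ^ l * (Nat.choose (2 * m) l : ℝ)) := by gcongr
    _ = _ := by ring

/-- **Combinatorial estimate from the proof of Lemma 2.3.**
For all integers `m ≥ 1` and `N` with `4m ≤ N`,
`(1/(m!·N^{3m})) · ∑_{l=0}^{2m} ∑_{p=1}^{⌊(4m−l)/2⌋}
  C(N,l)·C(N−l,p)·C(2m,l)·2^l·l!·p^{4m−l} ≤ e^{9m}`. -/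
theorem statement4 (m N : ℕ) (hm : 1 ≤ m) (hN : 4 * m ≤ N) :
    (1 / ((Nat.factorial m : ℝ) * (N : ℝ) ^ (3 * m))) *
        ∑ l ∈ Finset.range (2 * m + 1),
          ∑ p ∈ Finset.Icc 1 ((4 * m - l) / 2),
            (Nat.choose N l : ℝ) * (Nat.choose (N - l) p : ℝ) *
              (Nat.choose (2 * m) l : ℝ) * 2 ^ l * (Nat.factorial l : ℝ) *
              (p : ℝ) ^ (4 * m - l)
      ≤ Real.exp (9 * m) := by
  have hK : (0 : ℝ) < (Nat.factorial m : ℝ) * (N : ℝ) ^ (3 * m) := by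
    have h1 : (0 : ℝ) < Nat.factorial m := by exact_mod_cast Nat.factorial_pos m
    have h2 : (0 : ℝ) < N := by
      have : 0 < N := by omega
      exact_mod_cast this
    positivity
  rw [one_div, inv_mul_le_iff₀ hK]
  set K := (Nat.factorial m : ℝ) * (N : ℝ) ^ (3 * m) with hKdef
  have hbin : ∑ l ∈ Finset.range (2 * m + 1), (2 : ℝ) ^ l * (Nat.choose (2 * m) l : ℝ)
      = 9 ^ m := by
    have h := add_pow (2 : ℝ) 1 (2 * m)
    simp only [one_pow, mul_one] at h
    rw [← h, pow_mul]; norm_num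
  have h2m : (2 * m : ℝ) ≤ 4 ^ m := by
    have : 2 * m ≤ 4 ^ m := by
      have := (Nat.lt_two_pow_self (n := 2 * m)).le
      rwa [pow_mul] at this
    exact_mod_cast this
  have he : (72 : ℝ) ≤ Real.exp 6 := by
    have h : Real.exp 6 = Real.exp 1 ^ 6 := by rw [← Real.exp_nat_mul]; norm_num
    rw [h]
    calc (72 : ℝ) ≤ 2.7 ^ 6 := by norm_num
      _ ≤ _ := by
        have := Real.exp_one_gt_d9
        gcongr
        linarith
  calc _ ≤ ∑ l ∈ Finset.range (2 * m + 1), (2 * m : ℝ) * (K * (Real.exp (3 * m) * 2 ^ m) *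
        ((2 : ℝ) ^ l * (Nat.choose (2 * m) l : ℝ))) := by
        refine Finset.sum_le_sum fun l hl => ?_
        have hl' : l ≤ 2 * m := by
          have := Finset.mem_range.mp hl
          omega
        refine (Finset.sum_le_sum fun p hp =>
          aux_term m N l p hm hN hl' (Finset.mem_Icc.mp hp).2).trans ?_
        rw [Finset.sum_const, nsmul_eq_mul, Nat.card_Icc]
        have : (((4 * m - l) / 2 + 1 - 1 : ℕ) : ℝ) ≤ 2 * m := by
          have : (4 * m - l) / 2 + 1 - 1 ≤ 2 * m := by omega
          exact_mod_cast this
        gcongr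
    _ = (2 * m : ℝ) * (K * (Real.exp (3 * m) * 2 ^ m) * 9 ^ m) := by
        rw [← Finset.mul_sum, ← Finset.mul_sum, hbin]
    _ ≤ (4 : ℝ) ^ m * (K * (Real.exp (3 * m) * 2 ^ m) * 9 ^ m) := by gcongr
    _ = K * (Real.exp (3 * m) * 72 ^ m) := by
        rw [show (72 : ℝ) = 4 * 2 * 9 by norm_num, mul_pow, mul_pow]; ring
    _ ≤ K * (Real.exp (3 * m) * Real.exp 6 ^ m) := by gcongr
    _ = K * Real.exp (9 * m) := by
        rw [← Real.exp_nat_mul, ← Real.exp_add]; congr 2; ring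
end

section
/- Let (E, ℰ) be a measurable space, let ν be a probability measure on E, and let Φ : E → [0,∞) be a bounded measurable function. Then log ∫_E e^{Φ} dν = sup { ∫_E Φ dμ − H(μ|ν) : μ a probability measure on E with H(μ|ν) < ∞ }. -/
open MeasureTheory Classical

/-- The relative entropy `H(μ|ν) := ∫ (dμ/dν) log(dμ/dν) dν` if `μ ≪ ν` (and the integrand
is integrable, i.e. the integral is finite; otherwise the value is `+∞`), with values in
the extended reals. -/
noncomputable def relEntropy {E : Type*} [MeasurableSpace E] (μ ν : Measure E) : EReal :=
  if μ ≪ ν ∧ Integrable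
      (fun x => (μ.rnDeriv ν x).toReal * Real.log (μ.rnDeriv ν x).toReal) ν
  then ((∫ x, (μ.rnDeriv ν x).toReal * Real.log (μ.rnDeriv ν x).toReal ∂ν : ℝ) : EReal)
  else ⊤

/-- **Donsker–Varadhan variational formula.**  Let `ν` be a probability measure on a
measurable space `E` and let `Φ : E → [0,∞)` be a bounded measurable function.  Then
`log ∫ e^Φ dν = sup { ∫ Φ dμ − H(μ|ν) : μ a probability measure with H(μ|ν) < ∞ }`,
expressed here as: `log ∫ e^Φ dν` is the least upper bound of that set of reals. -/
theorem statement6 {E : Type*} [MeasurableSpace E]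
    (ν : Measure E) [IsProbabilityMeasure ν]
    (Φ : E → ℝ) (hΦmeas : Measurable Φ) (hΦnonneg : ∀ x, 0 ≤ Φ x)
    (B : ℝ) (hΦbdd : ∀ x, Φ x ≤ B) :
    IsLUB
      { r : ℝ | ∃ μ : Measure E, IsProbabilityMeasure μ ∧ relEntropy μ ν < ⊤ ∧
          r = ∫ x, Φ x ∂μ - (relEntropy μ ν).toReal }
      (Real.log (∫ x, Real.exp (Φ x) ∂ν)) := by
  have hbd : ∀ x, ‖Φ x‖ ≤ B := fun x => by
    rw [Real.norm_eq_abs, abs_of_nonneg (hΦnonneg x)]; exact hΦbdd x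
  have hΦi : ∀ (μ : Measure E) [IsProbabilityMeasure μ], Integrable Φ μ := fun μ _ =>
    Integrable.of_bound hΦmeas.aestronglyMeasurable B (Filter.Eventually.of_forall hbd)
  have hexp : Integrable (fun x => Real.exp (Φ x)) ν := by
    refine Integrable.of_bound (Real.measurable_exp.comp hΦmeas).aestronglyMeasurable
      (Real.exp B) (Filter.Eventually.of_forall fun x => ?_)
    rw [Real.norm_eq_abs, abs_of_pos (Real.exp_pos _)]
    exact Real.exp_le_exp.2 (hΦbdd x)
  have hprob : IsProbabilityMeasure (ν.tilted Φ) := isProbabilityMeasure_tilted hexp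
  constructor
  · rintro r ⟨μ, hμ, hlt, rfl⟩
    have hc : μ ≪ ν ∧ Integrable
        (fun x => (μ.rnDeriv ν x).toReal * Real.log (μ.rnDeriv ν x).toReal) ν := by
      by_contra h
      rw [relEntropy, if_neg h] at hlt
      exact lt_irrefl _ hlt
    rw [relEntropy, if_pos hc, EReal.toReal_coe, integral_rnDeriv_mul_log hc.1]
    have hint := (integrable_rnDeriv_mul_log_iff hc.1).1 hc.2
    have h1 := integral_llr_tilted_right hc.1 (hΦi μ) hexp hint
    have h2 := InformationTheory.integral_llr_add_sub_measure_univ_nonneg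
      (hc.1.trans (absolutelyContinuous_tilted hexp))
      (integrable_llr_tilted_right hc.1 (hΦi μ) hint hexp)
    simp only [probReal_univ] at h2
    linarith
  · intro b hb
    have hac := tilted_absolutelyContinuous ν Φ
    have hllr : llr (ν.tilted Φ) ν =ᵐ[ν.tilted Φ]
        fun x => Φ x - Real.log (∫ x, Real.exp (Φ x) ∂ν) :=
      hac.ae_le (log_rnDeriv_tilted_left_self hexp)
    have hint : Integrable (llr (ν.tilted Φ) ν) (ν.tilted Φ) :=
      (integrable_congr hllr).2 ((hΦi _).sub (integrable_const _))
    have hc := And.intro hac ((integrable_rnDeriv_mul_log_iff hac).2 hint)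
    refine hb ⟨ν.tilted Φ, hprob, ?_, ?_⟩
    · rw [relEntropy, if_pos hc]
      exact EReal.coe_lt_top _
    · rw [relEntropy, if_pos hc, EReal.toReal_coe, integral_rnDeriv_mul_log hac,
        integral_congr_ae hllr, integral_sub (hΦi _) (integrable_const _)]
      simp
end

section
/- For every d ≥ 1 and every α > d/2 there exists a constant C_α > 0, depending only on α and d, with the following property: for every integer N ≥ 2, every probability measure ρ̄ on 𝕋^d, and every probability measure ρ_N on (𝕋^d)^N with H(ρ_N | ρ̄^{⊗N}) < ∞, ∫_{(𝕋^d)^N} Σ_{k ∈ ℤ^d} ⟨k⟩^{−2α} | (1/N) Σ_{i=1}^N e_k(x_i) − ∫_{𝕋^d} e_k dρ̄ |² dρ_N(x_1,…,x_N) ≤ (C_α/N) ( H(ρ_N | ρ̄^{⊗N}) + 1 ). -/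
open MeasureTheory Classical

/-- The Fourier character `e_k(x) = exp(√−1 k·x)` on the torus, for `k ∈ ℤ^d`. -/
noncomputable def ek (d : ℕ) (k : Fin d → ℤ) (x : Torus d) : ℂ :=
  ∏ j, fourier (k j) (x j)

lemma aux_gauss_lint (b : ℝ) (hb : 0 < b) :
    ∫⁻ g : ℝ, ENNReal.ofReal (Real.exp (-b * g ^ 2)) = ENNReal.ofReal (√(Real.pi / b)) := by
  rw [← integral_gaussian b, ofReal_integral_eq_lintegral_ofReal (integrable_exp_neg_mul_sq hb)]
  exact Filter.Eventually.of_forall fun x => (Real.exp_pos _).le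

lemma aux_gauss_shift (x : ℝ) :
    ∫⁻ g : ℝ, ENNReal.ofReal (Real.exp (-(1/4) * g ^ 2 + (1/2) * g * x)) =
      ENNReal.ofReal (Real.exp (x ^ 2 / 4)) * ENNReal.ofReal (√(Real.pi / (1/4))) := by
  rw [← aux_gauss_lint (1/4) (by norm_num), ← lintegral_const_mul _ (by fun_prop),
    ← lintegral_sub_right_eq_self
      (fun g => ENNReal.ofReal (Real.exp (x ^ 2 / 4)) * ENNReal.ofReal (Real.exp (-(1/4) * g ^ 2))) x]
  refine lintegral_congr fun g => ?_
  rw [← ENNReal.ofReal_mul (Real.exp_pos _).le, ← Real.exp_add]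
  congr 2
  ring

lemma aux_expsq {E : Type*} [MeasurableSpace E] (ν : Measure E) [IsProbabilityMeasure ν]
    (X : E → ℝ) (hX : Measurable X) (B : ℝ) (hB : ∀ x, |X x| ≤ B)
    (hm : ∀ t : ℝ, ∫ x, Real.exp (t * X x) ∂ν ≤ Real.exp (t ^ 2 / 2)) :
    ∫ x, Real.exp (X x ^ 2 / 4) ∂ν ≤ 2 := by
  have hint : ∀ t : ℝ, Integrable (fun x => Real.exp (t * X x)) ν := by
    intro t
    refine Integrable.of_bound (C := Real.exp (|t| * B)) (by fun_prop) ?_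
    refine Filter.Eventually.of_forall fun x => ?_
    rw [Real.norm_eq_abs, abs_of_pos (Real.exp_pos _), Real.exp_le_exp]
    calc t * X x ≤ |t * X x| := le_abs_self _
      _ = |t| * |X x| := abs_mul _ _
      _ ≤ _ := mul_le_mul_of_nonneg_left (hB x) (abs_nonneg _)
  have hml : ∀ t : ℝ, ∫⁻ x, ENNReal.ofReal (Real.exp (t * X x)) ∂ν
      ≤ ENNReal.ofReal (Real.exp (t ^ 2 / 2)) := by
    intro t
    rw [← ofReal_integral_eq_lintegral_ofReal (hint t)
      (Filter.Eventually.of_forall fun x => (Real.exp_pos _).le)]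
    exact ENNReal.ofReal_le_ofReal (hm t)
  have key : (∫⁻ x, ENNReal.ofReal (Real.exp (X x ^ 2 / 4)) ∂ν) * ENNReal.ofReal (√(Real.pi / (1/4)))
      ≤ ENNReal.ofReal (√(Real.pi / (1/8))) := by
    rw [← lintegral_mul_const _ (by fun_prop)]
    simp_rw [← aux_gauss_shift]
    rw [lintegral_lintegral_swap (by fun_prop), ← aux_gauss_lint (1/8) (by norm_num)]
    refine lintegral_mono fun g => ?_
    calc ∫⁻ x, ENNReal.ofReal (Real.exp (-(1/4) * g ^ 2 + (1/2) * g * X x)) ∂ν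
        = ENNReal.ofReal (Real.exp (-(1/4) * g ^ 2)) *
          ∫⁻ x, ENNReal.ofReal (Real.exp (((1/2) * g) * X x)) ∂ν := by
          rw [← lintegral_const_mul _ (by fun_prop)]
          refine lintegral_congr fun x => ?_
          rw [← ENNReal.ofReal_mul (Real.exp_pos _).le, ← Real.exp_add]
      _ ≤ ENNReal.ofReal (Real.exp (-(1/4) * g ^ 2)) *
          ENNReal.ofReal (Real.exp (((1/2) * g) ^ 2 / 2)) := by
          gcongr
          exact hml _
      _ = _ := by
          rw [← ENNReal.ofReal_mul (Real.exp_pos _).le, ← Real.exp_add]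
          congr 2
          ring
  have hI : Integrable (fun x => Real.exp (X x ^ 2 / 4)) ν := by
    refine Integrable.of_bound (C := Real.exp (B ^ 2 / 4)) (by fun_prop) ?_
    refine Filter.Eventually.of_forall fun x => ?_
    rw [Real.norm_eq_abs, abs_of_pos (Real.exp_pos _), Real.exp_le_exp]
    have := sq_le_sq' (by have := abs_le.1 (hB x); linarith [this.1]) (abs_le.1 (hB x)).2
    linarith
  rw [← ofReal_integral_eq_lintegral_ofReal hI
      (Filter.Eventually.of_forall fun x => (Real.exp_pos _).le),
    ← ENNReal.ofReal_mul (integral_nonneg fun x => (Real.exp_pos _).le),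
    ENNReal.ofReal_le_ofReal_iff (Real.sqrt_nonneg _)] at key
  have h1 : √(Real.pi / (1/8)) ≤ 2 * √(Real.pi / (1/4)) := by
    rw [show (2:ℝ) * √(Real.pi / (1/4)) = √(4 * (Real.pi / (1/4))) by
      rw [Real.sqrt_mul (by norm_num), show (4:ℝ) = 2 ^ 2 by norm_num, Real.sqrt_sq (by norm_num)]]
    apply Real.sqrt_le_sqrt
    have := Real.pi_pos
    linarith
  have h2 : 0 < √(Real.pi / (1/4)) := Real.sqrt_pos.2 (by positivity)
  exact le_of_mul_le_mul_right (key.trans h1) h2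

lemma aux_young (a φ : ℝ) (ha : 0 ≤ a) : a * φ ≤ a * Real.log a - a + Real.exp φ := by
  rcases ha.eq_or_lt with rfl | ha
  · simp; positivity
  · have h := Real.add_one_le_exp (φ - Real.log a)
    rw [Real.exp_sub, Real.exp_log ha, le_div_iff₀ ha] at h
    nlinarith

lemma aux_DV {E : Type*} [MeasurableSpace E] (μ ν : Measure E) [IsProbabilityMeasure μ]
    [IsProbabilityMeasure ν] (h : relEntropy μ ν < ⊤) (φ : E → ℝ) (hφ : Measurable φ) (B : ℝ)
    (hB : ∀ x, |φ x| ≤ B) :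
    ∫ x, φ x ∂μ ≤ (relEntropy μ ν).toReal - 1 + ∫ x, Real.exp (φ x) ∂ν := by
  unfold relEntropy at h ⊢
  split_ifs at h ⊢ with hc
  swap
  · exact absurd h (lt_irrefl _)
  obtain ⟨hac, hI⟩ := hc
  rw [EReal.toReal_coe]
  have hφi : Integrable φ μ :=
    Integrable.of_bound (C := B) hφ.aestronglyMeasurable (Filter.Eventually.of_forall hB)
  have he : Integrable (fun x => Real.exp (φ x)) ν := by
    refine Integrable.of_bound (C := Real.exp B) (by fun_prop) ?_
    refine Filter.Eventually.of_forall fun x => ?_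
    rw [Real.norm_eq_abs, abs_of_pos (Real.exp_pos _), Real.exp_le_exp]
    exact (abs_le.1 (hB x)).2
  have h1 : ∫ x, (μ.rnDeriv ν x).toReal ∂ν = 1 := by
    rw [Measure.integral_toReal_rnDeriv hac]; simp
  have hi1 : Integrable (fun x => (μ.rnDeriv ν x).toReal) ν := Measure.integrable_toReal_rnDeriv
  rw [← integral_rnDeriv_smul hac]
  conv_rhs => rw [← h1]
  have hs : Integrable (fun x => (μ.rnDeriv ν x).toReal * Real.log (μ.rnDeriv ν x).toReal
    - (μ.rnDeriv ν x).toReal) ν := hI.sub hi1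
  rw [← integral_sub hI hi1, ← integral_add hs he]
  refine integral_mono ((integrable_rnDeriv_smul_iff hac).2 hφi) (hs.add he) fun x => ?_
  exact aux_young _ _ ENNReal.toReal_nonneg

/-- main one-dimensional estimate -/
lemma aux_real {E : Type*} [MeasurableSpace E] (N : ℕ) (hN : 2 ≤ N) (ρ : Measure E)
    [IsProbabilityMeasure ρ] (μ : Measure (Fin N → E)) [IsProbabilityMeasure μ]
    (h : relEntropy μ (Measure.pi fun _ => ρ) < ⊤) (u : E → ℝ) (hu : Measurable u)
    (hb : ∀ x, |u x| ≤ 1) :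
    ∫ x, ((N : ℝ)⁻¹ * ∑ i, u (x i) - ∫ y, u y ∂ρ) ^ 2 ∂μ
      ≤ 4 / N * ((relEntropy μ (Measure.pi fun _ => ρ)).toReal + 1) := by
  have hN0 : (0:ℝ) < N := by positivity
  set m := ∫ y, u y ∂ρ with hm
  have hmb : |m| ≤ 1 := by
    have := norm_integral_le_of_norm_le_const (μ := ρ) (f := u) (C := 1)
      (Filter.Eventually.of_forall hb)
    simpa using this
  set X : (Fin N → E) → ℝ := fun x => (√N)⁻¹ * ∑ i, (u (x i) - m) with hX
  have hXm : Measurable X := by fun_prop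
  have hs : 0 < √(N:ℝ) := Real.sqrt_pos.2 hN0
  have hXb : ∀ x, |X x| ≤ (√N)⁻¹ * ∑ i : Fin N, 2 := by
    intro x
    rw [hX]
    simp only
    rw [abs_mul, abs_of_pos (inv_pos.2 hs)]
    gcongr
    refine (Finset.abs_sum_le_sum_abs _ _).trans (Finset.sum_le_sum fun i _ => ?_)
    refine (abs_sub _ _).trans ?_
    linarith [hb (x i)]
  have hmgf : ∀ t : ℝ, ∫ x, Real.exp (t * X x) ∂(Measure.pi fun _ : Fin N => ρ)
      ≤ Real.exp (t ^ 2 / 2) := by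
    intro t
    have hsub := ProbabilityTheory.hasSubgaussianMGF_of_mem_Icc (μ := ρ) (X := u) (a := -1) (b := 1)
      hu.aemeasurable (Filter.Eventually.of_forall fun x => abs_le.1 (hb x))
    have h1 := hsub.mgf_le (t * (√N)⁻¹)
    have e1 : ∀ x : Fin N → E, Real.exp (t * X x) =
        ∏ i, (fun y => Real.exp (t * (√N)⁻¹ * (u y - m))) (x i) := by
      intro x
      rw [← Real.exp_sum, ← Finset.mul_sum, hX]
      congr 1
      ring
    simp_rw [e1]
    rw [integral_fintype_prod_eq_pow (fun y => Real.exp (t * (√N)⁻¹ * (u y - m)))]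
    rw [ProbabilityTheory.mgf] at h1
    refine (pow_le_pow_left₀ (integral_nonneg fun _ => (Real.exp_pos _).le) h1 _).trans ?_
    rw [← Real.exp_nat_mul, Real.exp_le_exp, Fintype.card_fin]
    have : ((((‖(1:ℝ) - -1‖₊ / 2) ^ 2 : NNReal)) : ℝ) = 1 := by
      push_cast
      norm_num
    rw [this, mul_pow, inv_pow, Real.sq_sqrt hN0.le]
    apply le_of_eq
    field_simp
  have hE := aux_expsq _ X hXm _ hXb hmgf
  have hD := aux_DV μ (Measure.pi fun _ : Fin N => ρ) h (fun x => X x ^ 2 / 4) (by fun_prop)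
    (((√N)⁻¹ * ∑ i : Fin N, 2) ^ 2 / 4) (by
      intro x
      rw [abs_of_nonneg (by positivity)]
      have := sq_le_sq' (by have := abs_le.1 (hXb x); linarith [this.1]) (abs_le.1 (hXb x)).2
      linarith)
  have e2 : ∀ x : Fin N → E, ((N : ℝ)⁻¹ * ∑ i, u (x i) - m) ^ 2 = 4 / N * (X x ^ 2 / 4) := by
    intro x
    simp only [hX]
    rw [mul_pow, inv_pow, Real.sq_sqrt hN0.le, Finset.sum_sub_distrib]
    simp
    field_simp
  simp_rw [e2]
  rw [integral_const_mul]
  gcongr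
  linarith

lemma aux_sum_one (β : ℝ) (hβ : 1 / 2 < β) : Summable fun n : ℤ => (1 + (n:ℝ) ^ 2) ^ (-β) := by
  have h := Real.summable_abs_int_rpow (b := 2 * β) (by linarith)
  refine Summable.of_norm_bounded_eventually h ?_
  have : ∀ᶠ n : ℤ in Filter.cofinite, n ≠ 0 := by
    simpa using (Set.finite_singleton (0:ℤ)).compl_mem_cofinite
  filter_upwards [this] with n hn
  have hn' : (0:ℝ) < |(n:ℝ)| := abs_pos.2 (by exact_mod_cast hn)
  rw [Real.norm_eq_abs, abs_of_nonneg (by positivity)]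
  rw [show -(2 * β) = 2 * (-β) by ring, Real.rpow_mul hn'.le]
  refine Real.rpow_le_rpow_of_nonpos (by positivity) ?_ (by linarith)
  rw [Real.rpow_two, sq_abs]
  linarith

lemma aux_sum (d : ℕ) (hd : 1 ≤ d) (α : ℝ) (hα : (d : ℝ) / 2 < α) :
    Summable fun k : Fin d → ℤ => (1 + ∑ j, ((k j : ℝ)) ^ 2) ^ (-α) := by
  have hd0 : (0:ℝ) < d := by exact_mod_cast hd
  set β := α / d with hβ
  have hβ2 : 1 / 2 < β := by rw [hβ, lt_div_iff₀ hd0]; linarith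
  have h1 := aux_sum_one β hβ2
  have hprod : Summable fun k : Fin d → ℤ => ∏ j, (1 + (k j : ℝ) ^ 2) ^ (-β) := by
    refine summable_of_sum_le (c := ∏ j : Fin d, ∑' n : ℤ, (1 + (n:ℝ) ^ 2) ^ (-β))
      (fun k => by positivity) fun s => ?_
    have hsub : s ⊆ Fintype.piFinset (fun j => s.image (fun k => k j)) := by
      intro k hk
      rw [Fintype.mem_piFinset]
      exact fun j => Finset.mem_image_of_mem _ hk
    refine (Finset.sum_le_sum_of_subset_of_nonneg hsub fun _ _ _ => by positivity).trans ?_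
    rw [← Finset.prod_univ_sum (fun j => s.image (fun k => k j))
      (fun _ (n:ℤ) => (1 + (n:ℝ) ^ 2) ^ (-β))]
    refine Finset.prod_le_prod (fun j _ => Finset.sum_nonneg fun _ _ => by positivity) fun j _ => ?_
    exact h1.sum_le_tsum _ fun _ _ => by positivity
  refine Summable.of_nonneg_of_le (fun k => by positivity) (fun k => ?_) hprod
  have hS : (0:ℝ) < 1 + ∑ j, ((k j : ℝ)) ^ 2 := by positivity
  calc (1 + ∑ j, ((k j : ℝ)) ^ 2) ^ (-α) = ∏ j : Fin d, (1 + ∑ j, ((k j : ℝ)) ^ 2) ^ (-β) := by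
        rw [Finset.prod_const, Finset.card_univ, Fintype.card_fin, ← Real.rpow_natCast,
          ← Real.rpow_mul hS.le]
        congr 1
        rw [hβ]; field_simp
    _ ≤ _ := by
        refine Finset.prod_le_prod (fun _ _ => by positivity) fun j _ => ?_
        refine Real.rpow_le_rpow_of_nonpos (by positivity) ?_ (by linarith)
        have := Finset.single_le_sum (f := fun j => (k j : ℝ) ^ 2) (fun i _ => sq_nonneg _)
          (Finset.mem_univ j)
        simpa using this

lemma aux_ek_meas (d : ℕ) (k : Fin d → ℤ) : Measurable (ek d k) := by
  unfold ek
  refine Finset.measurable_prod _ fun j _ => ?_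
  exact (fourier (k j)).continuous.measurable.comp (measurable_pi_apply j)

lemma aux_ek_norm (d : ℕ) (k : Fin d → ℤ) (x : Torus d) : ‖ek d k x‖ = 1 := by
  unfold ek
  rw [norm_prod]
  exact Finset.prod_eq_one fun j _ => by rw [fourier_apply]; exact Circle.norm_coe _

lemma aux_mode (d : ℕ) (k : Fin d → ℤ) (N : ℕ) (hN : 2 ≤ N) (ρ : Measure (Torus d))
    [IsProbabilityMeasure ρ] (μ : Measure (Fin N → Torus d)) [IsProbabilityMeasure μ]
    (h : relEntropy μ (Measure.pi fun _ => ρ) < ⊤) :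
    (∀ x : Fin N → Torus d, ‖(N : ℂ)⁻¹ * (∑ i, ek d k (x i)) - ∫ y, ek d k y ∂ρ‖ ^ 2 ≤ 4) ∧
    Integrable (fun x : Fin N → Torus d =>
      ‖(N : ℂ)⁻¹ * (∑ i, ek d k (x i)) - ∫ y, ek d k y ∂ρ‖ ^ 2) μ ∧
    ∫ x : Fin N → Torus d, ‖(N : ℂ)⁻¹ * (∑ i, ek d k (x i)) - ∫ y, ek d k y ∂ρ‖ ^ 2 ∂μ
      ≤ 8 / N * ((relEntropy μ (Measure.pi fun _ => ρ)).toReal + 1) := by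
  have hN0 : (0:ℝ) < N := by positivity
  have hem := aux_ek_meas d k
  have hei : Integrable (ek d k) ρ := Integrable.of_bound (C := 1) hem.aestronglyMeasurable
    (Filter.Eventually.of_forall fun x => (aux_ek_norm d k x).le)
  have hbd : ∀ x : Fin N → Torus d,
      ‖(N : ℂ)⁻¹ * (∑ i, ek d k (x i)) - ∫ y, ek d k y ∂ρ‖ ^ 2 ≤ 4 := by
    intro x
    have h1 : ‖∫ y, ek d k y ∂ρ‖ ≤ 1 := by
      have := norm_integral_le_of_norm_le_const (μ := ρ) (f := ek d k) (C := 1)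
        (Filter.Eventually.of_forall fun x => (aux_ek_norm d k x).le)
      simpa using this
    have h2 : ‖(N : ℂ)⁻¹ * (∑ i, ek d k (x i))‖ ≤ 1 := by
      rw [norm_mul, norm_inv, Complex.norm_natCast, inv_mul_le_iff₀ hN0]
      refine (norm_sum_le _ _).trans ?_
      simp [aux_ek_norm]
    have h3 := norm_sub_le ((N : ℂ)⁻¹ * (∑ i, ek d k (x i))) (∫ y, ek d k y ∂ρ)
    have h4 := norm_nonneg ((N : ℂ)⁻¹ * (∑ i, ek d k (x i)) - ∫ y, ek d k y ∂ρ)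
    nlinarith
  have hre := aux_real N hN ρ μ h (fun x => (ek d k x).re) (by fun_prop)
    (fun x => (Complex.abs_re_le_norm _).trans (aux_ek_norm d k x).le)
  have him := aux_real N hN ρ μ h (fun x => (ek d k x).im) (by fun_prop)
    (fun x => (Complex.abs_im_le_norm _).trans (aux_ek_norm d k x).le)
  have hmre : ∫ y, (ek d k y).re ∂ρ = (∫ y, ek d k y ∂ρ).re := integral_re hei
  have hmim : ∫ y, (ek d k y).im ∂ρ = (∫ y, ek d k y ∂ρ).im := integral_im hei
  rw [hmre] at hre
  rw [hmim] at him
  have e : ∀ x : Fin N → Torus d, ‖(N : ℂ)⁻¹ * (∑ i, ek d k (x i)) - ∫ y, ek d k y ∂ρ‖ ^ 2 =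
      ((N : ℝ)⁻¹ * ∑ i, (ek d k (x i)).re - (∫ y, ek d k y ∂ρ).re) ^ 2 +
      ((N : ℝ)⁻¹ * ∑ i, (ek d k (x i)).im - (∫ y, ek d k y ∂ρ).im) ^ 2 := by
    intro x
    have hc : (N : ℂ)⁻¹ = (((N:ℝ)⁻¹ : ℝ) : ℂ) := by push_cast; rfl
    rw [← Complex.normSq_eq_norm_sq, Complex.normSq_apply, Complex.sub_re, Complex.sub_im, hc,
      Complex.re_ofReal_mul, Complex.im_ofReal_mul, Complex.re_sum, Complex.im_sum]
    ring
  refine ⟨hbd, Integrable.of_bound (C := 4) (Measurable.aestronglyMeasurable (by fun_prop)) (Filter.Eventually.of_forall fun x => ?_),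
    ?_⟩
  · rw [Real.norm_eq_abs, abs_of_nonneg (by positivity)]
    exact hbd x
  · have i1 : Integrable (fun x : Fin N → Torus d =>
        ((N : ℝ)⁻¹ * ∑ i, (ek d k (x i)).re - (∫ y, ek d k y ∂ρ).re) ^ 2) μ := by
      refine Integrable.of_bound (C := 4) (Measurable.aestronglyMeasurable (by fun_prop)) (Filter.Eventually.of_forall fun x => ?_)
      rw [Real.norm_eq_abs, abs_of_nonneg (by positivity)]
      have := hbd x
      rw [e x] at this
      linarith [sq_nonneg ((N : ℝ)⁻¹ * ∑ i, (ek d k (x i)).im - (∫ y, ek d k y ∂ρ).im)]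
    have i2 : Integrable (fun x : Fin N → Torus d =>
        ((N : ℝ)⁻¹ * ∑ i, (ek d k (x i)).im - (∫ y, ek d k y ∂ρ).im) ^ 2) μ := by
      refine Integrable.of_bound (C := 4) (Measurable.aestronglyMeasurable (by fun_prop)) (Filter.Eventually.of_forall fun x => ?_)
      rw [Real.norm_eq_abs, abs_of_nonneg (by positivity)]
      have := hbd x
      rw [e x] at this
      linarith [sq_nonneg ((N : ℝ)⁻¹ * ∑ i, (ek d k (x i)).re - (∫ y, ek d k y ∂ρ).re)]
    simp_rw [e]
    rw [integral_add i1 i2]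
    refine (add_le_add hre him).trans (le_of_eq ?_)
    ring

theorem statement7 (d : ℕ) (hd : 1 ≤ d) (α : ℝ) (hα : (d : ℝ) / 2 < α) :
    ∃ C : ℝ, 0 < C ∧
      ∀ N : ℕ, 2 ≤ N →
      ∀ (ρ : Measure (Torus d)), IsProbabilityMeasure ρ →
      ∀ (ρN : Measure (Fin N → Torus d)), IsProbabilityMeasure ρN →
        relEntropy ρN (Measure.pi fun _ => ρ) < ⊤ →
        ∫ x : Fin N → Torus d,
            ∑' k : Fin d → ℤ,
              (1 + ∑ j, ((k j : ℝ)) ^ 2) ^ (-α) *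
                ‖(N : ℂ)⁻¹ * (∑ i, ek d k (x i)) - ∫ y, ek d k y ∂ρ‖ ^ 2
          ∂ρN
        ≤ C / N * ((relEntropy ρN (Measure.pi fun _ => ρ)).toReal + 1) := by
  have hS := aux_sum d hd α hα
  have hw : ∀ k : Fin d → ℤ, 0 < (1 + ∑ j, ((k j : ℝ)) ^ 2) ^ (-α) := fun k => by positivity
  refine ⟨8 * ∑' k : Fin d → ℤ, (1 + ∑ j, ((k j : ℝ)) ^ 2) ^ (-α), ?_, ?_⟩
  · exact mul_pos (by norm_num) (hS.tsum_pos (fun k => (hw k).le) 0 (hw 0))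
  intro N hN ρ hρ μ hμ h
  have hint := fun k => (aux_mode d k N hN ρ μ h).2.1.const_mul ((1 + ∑ j, ((k j : ℝ)) ^ 2) ^ (-α))
  have hle : ∀ k : Fin d → ℤ, ∫ x : Fin N → Torus d, (1 + ∑ j, ((k j : ℝ)) ^ 2) ^ (-α) *
      ‖(N : ℂ)⁻¹ * (∑ i, ek d k (x i)) - ∫ y, ek d k y ∂ρ‖ ^ 2 ∂μ ≤
      (1 + ∑ j, ((k j : ℝ)) ^ 2) ^ (-α) *
        (8 / N * ((relEntropy μ (Measure.pi fun _ => ρ)).toReal + 1)) := by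
    intro k
    rw [integral_const_mul]
    exact mul_le_mul_of_nonneg_left (aux_mode d k N hN ρ μ h).2.2 (hw k).le
  have hsum : Summable fun k : Fin d → ℤ => ∫ x : Fin N → Torus d,
      (1 + ∑ j, ((k j : ℝ)) ^ 2) ^ (-α) *
      ‖(N : ℂ)⁻¹ * (∑ i, ek d k (x i)) - ∫ y, ek d k y ∂ρ‖ ^ 2 ∂μ :=
    Summable.of_nonneg_of_le (fun k => integral_nonneg fun x => by positivity) hle
      (hS.mul_right _)
  rw [← integral_tsum_of_summable_integral_norm hint]
  · refine (hsum.tsum_le_tsum hle (hS.mul_right _)).trans (le_of_eq ?_)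
    rw [tsum_mul_right]
    ring
  · refine hsum.congr fun k => integral_congr_ae (Filter.Eventually.of_forall fun x => ?_)
    simp only
    rw [Real.norm_eq_abs, abs_of_nonneg (by positivity)]
end
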